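/- arXiv:2312.13159 — 2 statements merged into one kernel-verified Lean document; each statement's English description precedes it below -/
import Mathlib

section
/- For k ≥ 1, the number of self-dual Tamari intervals of size 2k equals (1/(3k+1)) · C(4k, k), and for k ≥ 0 the number of self-dual Tamari intervals of size 2k+1 equals (1/(k+1)) · C(4k+2, k). -/
/-- Binary trees: a leaf or a binary node with two subtrees. -/
inductive BT : Type
  | leaf : BT
  | node : BT → BT → BT

namespace BT

/-- Number of binary (internal) nodes. -/
def size : BT → ℕ
  | leaf => 0
  | node l r => l.size + r.size + 1

/-- One right rotation somewhere in the tree: ((A,B),C) ↦ (A,(B,C)). -/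
inductive Rot : BT → BT → Prop
  | rotate (A B C : BT) : Rot (node (node A B) C) (node A (node B C))
  | left {l l' : BT} (r : BT) : Rot l l' → Rot (node l r) (node l' r)
  | right (l : BT) {r r' : BT} : Rot r r' → Rot (node l r) (node l r')

/-- Tamari order: reflexive-transitive closure of right rotation. -/
def tle (T T' : BT) : Prop := Relation.ReflTransGen Rot T T'

/-- Bracket-vector: sizes of right subtrees of nodes, in infix order. -/
def bracket : BT → List ℕ
  | leaf => []
  | node l r => bracket l ++ r.size :: bracket r

/-- Dual bracket-vector: sizes of left subtrees of nodes, in infix order. -/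
def dualBracket : BT → List ℕ
  | leaf => []
  | node l r => dualBracket l ++ l.size :: dualBracket r

/-- Canopy word: for each leaf (left to right), 1 if it is a left child, 0 if a right child;
the argument `b` is the value assigned to the tree if it is itself a leaf. -/
def canopyAux (b : ℕ) : BT → List ℕ
  | leaf => [b]
  | node l r => canopyAux 1 l ++ canopyAux 0 r

/-- Canopy-vector of a binary tree. -/
def canopy (T : BT) : List ℕ := canopyAux 1 T

/-- Left-right mirror. -/
def mir : BT → BT
  | leaf => leaf
  | node l r => node (mir r) (mir l)

/-- Tamari interval of size n. -/
def interval (p : BT × BT) (n : ℕ) : Prop :=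
  p.1.size = n ∧ p.2.size = n ∧ tle p.1 p.2

/-- Tamari interval (of unspecified size). -/
def isInt (p : BT × BT) : Prop := p.1.size = p.2.size ∧ tle p.1 p.2

/-- The rise operation (T,T') ↦ ((T,ε),(ε,T')). -/
def riseF (p : BT × BT) : BT × BT := (node p.1 leaf, node leaf p.2)

/-- An interval is modern when its rise is again an interval. -/
def modern (p : BT × BT) : Prop := tle (node p.1 leaf) (node leaf p.2)

/-- Infinitely modern: every iterated rise is an interval. -/
def infModern (p : BT × BT) : Prop :=
  ∀ k : ℕ, tle ((riseF^[k] p).1) ((riseF^[k] p).2)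

/-- Synchronized: equal canopies. -/
def synced (p : BT × BT) : Prop := canopy p.1 = canopy p.2

/-- Self-dual: equal to its dual (mir T', mir T). -/
def selfDual (p : BT × BT) : Prop := mir p.2 = p.1 ∧ mir p.1 = p.2

/-- Number of positions where the two canopies agree. -/
def agreeCount (p : BT × BT) : ℕ :=
  ((List.range (p.1.size + 1)).filter
    (fun i => (canopy p.1).getD i 0 == (canopy p.2).getD i 0)).length

/-- Number of canopy positions of joint type (a on top, b on bottom), for an interval (T,T')
with T' the upper tree. -/
def typeCount (a b : ℕ) (p : BT × BT) : ℕ :=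
  ((List.range (p.1.size + 1)).filter
    (fun i => ((canopy p.2).getD i 0 == a) && ((canopy p.1).getD i 0 == b))).length

end BT

namespace BT

/-- Graft `V` at the rightmost leaf. -/
def gr : BT → BT → BT
  | leaf, V => V
  | node l r, V => node l (gr r V)

/-- Number of nodes on the right spine. -/
def rs : BT → ℕ
  | leaf => 0
  | node _ r => rs r + 1

/-- Right subtree size of the `i`-th node in infix order. -/
def b : BT → ℕ → ℕ
  | leaf, _ => 0
  | node l r, i =>
    if i < l.size then b l i else if i = l.size then r.size else b r (i - l.size - 1)

/-- Left subtree size of the `i`-th node in infix order. -/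
def d : BT → ℕ → ℕ
  | leaf, _ => 0
  | node l r, i =>
    if i < l.size then d l i else if i = l.size then l.size else d r (i - l.size - 1)

/-- Componentwise comparison of bracket vectors. -/
def Le (U V : BT) : Prop := U.size = V.size ∧ ∀ i, i < U.size → b U i ≤ b V i

lemma size_gr (Y V : BT) : (gr Y V).size = Y.size + V.size := by
  induction Y with
  | leaf => simp [gr, size]
  | node l r _ ih => simp [gr, size, ih]; omega

lemma size_mir (T : BT) : (mir T).size = T.size := by
  induction T with
  | leaf => rfl
  | node l r ih1 ih2 => simp [mir, size, ih1, ih2]; omega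

lemma mir_mir (T : BT) : mir (mir T) = T := by
  induction T with
  | leaf => rfl
  | node l r ih1 ih2 => simp [mir, ih1, ih2]

lemma rs_gr (Y V : BT) : rs (gr Y V) = rs Y + rs V := by
  induction Y with
  | leaf => simp [gr, rs]
  | node l r _ ih => simp [gr, rs, ih]; omega

lemma gr_gr (X Y Z : BT) : gr (gr X Y) Z = gr X (gr Y Z) := by
  induction X with
  | leaf => rfl
  | node l r _ ih => simp [gr, ih]

lemma size_eq_zero {T : BT} (h : T.size = 0) : T = leaf := by
  cases T with
  | leaf => rfl
  | node l r => simp [size] at h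

lemma b_lt (T : BT) : ∀ i, i < T.size → i + b T i + 1 ≤ T.size := by
  induction T with
  | leaf => intro i h; simp [size] at h
  | node l r ih1 ih2 =>
    intro i h
    simp only [size] at h
    simp only [b, size]
    split_ifs with h1 h2
    · have := ih1 i h1; omega
    · omega
    · have := ih2 (i - l.size - 1) (by omega); omega

lemma b_node_lt {l r : BT} {i : ℕ} (h : i < l.size) : b (node l r) i = b l i := by
  simp [b, h]
lemma b_node_eq {l r : BT} {i : ℕ} (h : i = l.size) : b (node l r) i = r.size := by
  simp [b, h]
lemma b_node_gt {l r : BT} {i : ℕ} (h : l.size < i) :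
    b (node l r) i = b r (i - l.size - 1) := by
  simp [b, show ¬ i < l.size by omega, show ¬ i = l.size by omega]
lemma d_node_lt {l r : BT} {i : ℕ} (h : i < l.size) : d (node l r) i = d l i := by
  simp [d, h]
lemma d_node_eq {l r : BT} {i : ℕ} (h : i = l.size) : d (node l r) i = l.size := by
  simp [d, h]
lemma d_node_gt {l r : BT} {i : ℕ} (h : l.size < i) :
    d (node l r) i = d r (i - l.size - 1) := by
  simp [d, show ¬ i < l.size by omega, show ¬ i = l.size by omega]

lemma b_gr_right (Y V : BT) : ∀ i, Y.size ≤ i → b (gr Y V) i = b V (i - Y.size) := by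
  induction Y with
  | leaf => intro i _; simp [gr, size]
  | node l r _ ih =>
    intro i h
    simp only [size] at h
    rw [gr, b_node_gt (by omega), ih _ (by omega)]
    simp only [size]
    congr 1; omega

lemma b_gr_left (Y V : BT) : ∀ i, i < Y.size →
    b (gr Y V) i = if i + b Y i + 1 = Y.size then Y.size + V.size - 1 - i else b Y i := by
  induction Y with
  | leaf => intro i h; simp [size] at h
  | node l r _ ih =>
    intro i h
    simp only [size] at h
    rw [gr]
    rcases lt_trichotomy i l.size with h1 | h1 | h1
    · rw [b_node_lt h1, b_node_lt h1, if_neg]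
      have := b_lt l i h1
      simp only [size]; omega
    · rw [b_node_eq h1, b_node_eq h1, size_gr, if_pos]
      · simp only [size]; omega
      · simp only [size]; omega
    · rw [b_node_gt h1, b_node_gt h1, ih _ (by omega)]
      split_ifs <;> simp only [size] at * <;> omega

lemma d_gr_right (Y V : BT) : ∀ i, Y.size ≤ i → d (gr Y V) i = d V (i - Y.size) := by
  induction Y with
  | leaf => intro i _; simp [gr, size]
  | node l r _ ih =>
    intro i h
    simp only [size] at h
    rw [gr, d_node_gt (by omega), ih _ (by omega)]
    simp only [size]
    congr 1; omega

lemma d_gr_left (Y V : BT) : ∀ i, i < Y.size → d (gr Y V) i = d Y i := by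
  induction Y with
  | leaf => intro i h; simp [size] at h
  | node l r _ ih =>
    intro i h
    simp only [size] at h
    rw [gr]
    rcases lt_trichotomy i l.size with h1 | h1 | h1
    · rw [d_node_lt h1, d_node_lt h1]
    · rw [d_node_eq h1, d_node_eq h1]
    · rw [d_node_gt h1, d_node_gt h1, ih _ (by omega)]

/-- changing the grafted tree does not change satisfied bounds -/
lemma b_gr_congr (Y V V' : BT) (i x : ℕ) (hi : i < Y.size)
    (h1 : x + i + 1 ≤ Y.size + V.size) (h2 : x + i + 1 ≤ Y.size + V'.size) :
    x ≤ b (gr Y V) i ↔ x ≤ b (gr Y V') i := by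
  rw [b_gr_left _ _ _ hi, b_gr_left _ _ _ hi]
  split_ifs <;> omega

lemma b_mir (T : BT) : ∀ i, i < T.size → b (mir T) i = d T (T.size - 1 - i) := by
  induction T with
  | leaf => intro i h; simp [size] at h
  | node l r ih1 ih2 =>
    intro i h
    simp only [size] at h
    simp only [mir, size]
    rcases lt_trichotomy i r.size with h1 | h1 | h1
    · rw [b_node_lt (by rw [size_mir]; exact h1), ih2 _ h1, d_node_gt (by omega)]
      congr 1; omega
    · rw [b_node_eq (by rw [size_mir]; exact h1), d_node_eq (by omega), size_mir]
    · rw [b_node_gt (by rw [size_mir]; exact h1), size_mir, ih1 _ (by omega),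
        d_node_lt (by omega)]
      congr 1; omega

lemma d_le (T : BT) : ∀ i, i < T.size → d T i ≤ i := by
  intro i h
  have h1 := b_mir T (T.size - 1 - i) (by omega)
  have h2 := b_lt (mir T) (T.size - 1 - i) (by rw [size_mir]; omega)
  rw [size_mir] at h2
  rw [show T.size - 1 - (T.size - 1 - i) = i by omega] at h1
  omega

lemma d_mir (T : BT) (i : ℕ) (h : i < T.size) : d (mir T) i = b T (T.size - 1 - i) := by
  have h1 := b_mir (mir T) (T.size - 1 - i) (by rw [size_mir]; omega)
  rw [mir_mir, size_mir] at h1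
  rw [h1]; congr 1; omega

lemma Rot.size_eq {T T' : BT} (h : Rot T T') : T.size = T'.size := by
  induction h with
  | rotate A B C => simp only [size]; omega
  | left r _ ih => simp only [size]; omega
  | right l _ ih => simp only [size]; omega

lemma Rot.b_le {T T' : BT} (h : Rot T T') : ∀ i, b T i ≤ b T' i := by
  induction h with
  | rotate A B C =>
    intro i
    rcases lt_trichotomy i (A.size + B.size + 1) with h | h | h
    · rw [b_node_lt (by simpa only [size] using h)]
      rcases lt_trichotomy i A.size with h1 | h1 | h1
      · rw [b_node_lt h1, b_node_lt h1]
      · rw [b_node_eq h1, b_node_eq h1]; simp only [size]; omega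
      · rw [b_node_gt h1, b_node_gt h1, b_node_lt (by omega)]
    · rw [b_node_eq (by simpa only [size] using h), b_node_gt (by omega), b_node_eq (by omega)]
    · rw [b_node_gt (by simpa only [size] using h), b_node_gt (by omega), b_node_gt (by omega)]
      simp only [size]
      rw [show i - (A.size + B.size + 1) - 1 = i - A.size - 1 - B.size - 1 by omega]
  | left r h ih =>
    intro i
    have := h.size_eq
    simp only [b]
    rw [this]
    split_ifs
    · exact ih i
    · exact le_refl _
    · exact le_refl _
  | right l h ih =>
    intro i
    have := h.size_eq
    simp only [b]
    rw [this]
    split_ifs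
    · exact le_refl _
    · exact le_refl _
    · exact ih _

lemma tle_size {T T' : BT} (h : tle T T') : T.size = T'.size := by
  induction h with
  | refl => rfl
  | tail _ h ih => exact ih.trans h.size_eq

lemma Le_of_tle {T T' : BT} (h : tle T T') : Le T T' := by
  refine ⟨tle_size h, ?_⟩
  induction h with
  | refl => intro i _; exact le_refl _
  | tail _ h ih => intro i hi; exact (ih i hi).trans (h.b_le i)

lemma Rot.mir' {T T' : BT} (h : Rot T T') : Rot (mir T') (mir T) := by
  induction h with
  | rotate A B C => exact Rot.rotate _ _ _
  | left r _ ih => exact Rot.right _ ih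
  | right l _ ih => exact Rot.left _ ih

lemma tle_mir {T T' : BT} (h : tle T T') : tle (mir T') (mir T) := by
  induction h with
  | refl => exact Relation.ReflTransGen.refl
  | tail _ h ih => exact Relation.ReflTransGen.head h.mir' ih

lemma tle_left {l l' : BT} (r : BT) (h : tle l l') : tle (node l r) (node l' r) := by
  induction h with
  | refl => exact Relation.ReflTransGen.refl
  | tail _ h ih => exact Relation.ReflTransGen.tail ih (Rot.left r h)

lemma tle_right (l : BT) {r r' : BT} (h : tle r r') : tle (node l r) (node l r') := by
  induction h with
  | refl => exact Relation.ReflTransGen.refl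
  | tail _ h ih => exact Relation.ReflTransGen.tail ih (Rot.right l h)

lemma tle_gr (Y Z W : BT) : tle (node (gr Y Z) W) (gr Y (node Z W)) := by
  induction Y with
  | leaf => exact Relation.ReflTransGen.refl
  | node l r _ ih =>
    exact Relation.ReflTransGen.head (Rot.rotate _ _ _) (tle_right l ih)

/-- Cutting a tree along the right spine. -/
lemma exists_cut (T : BT) : ∀ c, c < T.size →
    ∃ Y Z W, T = gr Y (node Z W) ∧ Y.size ≤ c ∧ c ≤ Y.size + Z.size := by
  induction T with
  | leaf => intro c h; simp [size] at h
  | node l r _ ih =>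
    intro c h
    by_cases hc : c ≤ l.size
    · exact ⟨leaf, l, r, rfl, by simp [size], by simpa [size] using hc⟩
    · simp only [size] at h
      obtain ⟨Y, Z, W, h1, h2, h3⟩ := ih (c - l.size - 1) (by omega)
      refine ⟨node l Y, Z, W, by rw [h1]; rfl, ?_, ?_⟩ <;> simp only [size] <;> omega

lemma cut_unique (Y : BT) : ∀ (Y' Z Z' W W' : BT) (c : ℕ), gr Y (node Z W) = gr Y' (node Z' W') →
    Y.size ≤ c → c ≤ Y.size + Z.size → Y'.size ≤ c → c ≤ Y'.size + Z'.size →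
    Y = Y' ∧ Z = Z' ∧ W = W' := by
  induction Y with
  | leaf =>
    intro Y' Z Z' W W' c h h1 h2 h3 h4
    cases Y' with
    | leaf => simpa [gr] using h
    | node l r =>
      simp only [gr, node.injEq] at h
      simp only [size] at *
      rw [h.1] at h2
      omega
  | node l r _ ih =>
    intro Y' Z Z' W W' c h h1 h2 h3 h4
    cases Y' with
    | leaf =>
      simp only [gr, node.injEq] at h
      simp only [size] at *
      rw [← h.1] at h4
      omega
    | node l' r' =>
      simp only [gr, node.injEq] at h
      simp only [size] at *
      obtain ⟨rfl, h⟩ := h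
      have := ih r' Z Z' W W' (c - l.size - 1) h (by omega) (by omega) (by omega) (by omega)
      simpa using this

lemma Le_cut {A R X : BT} (h : Le (node A R) X) :
    ∃ Y Z W, X = gr Y (node Z W) ∧ Y.size + Z.size = A.size ∧ Le A (gr Y Z) ∧ Le R W := by
  obtain ⟨hs, h⟩ := h
  simp only [size] at hs h
  obtain ⟨Y, Z, W, rfl, h1, h2⟩ := exists_cut X A.size (by omega)
  simp only [size_gr, size] at hs
  have h3 : Y.size + Z.size = A.size := by
    by_contra hne
    have := h A.size (by omega)
    rw [b_node_eq rfl, b_gr_right _ _ _ h1, b_node_lt (by omega)] at this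
    have := b_lt Z (A.size - Y.size) (by omega)
    omega
  refine ⟨Y, Z, W, rfl, h3, ⟨by rw [size_gr, h3], ?_⟩, by omega, ?_⟩
  · intro i hi
    have h4 := h i (by omega)
    rw [b_node_lt hi] at h4
    have := b_lt A i hi
    by_cases hY : i < Y.size
    · rwa [b_gr_congr Y _ Z _ _ hY (by simp only [size]; omega) (by omega)] at h4
    · rw [b_gr_right _ _ _ (by omega), b_node_lt (by omega)] at h4
      rwa [b_gr_right _ _ _ (by omega)]
  · intro i hi
    have h4 := h (A.size + 1 + i) (by omega)
    rw [b_node_gt (by omega), b_gr_right _ _ _ (by omega), b_node_gt (by omega)] at h4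
    convert h4 using 2 <;> omega

lemma tle_of_Le (T : BT) : ∀ X, Le T X → tle T X := by
  induction T with
  | leaf =>
    intro X h
    rw [size_eq_zero h.1.symm]
    exact Relation.ReflTransGen.refl
  | node A R ih1 ih2 =>
    intro X h
    obtain ⟨Y, Z, W, rfl, _, h1, h2⟩ := Le_cut h
    exact (tle_right A (ih2 _ h2)).trans ((tle_left W (ih1 _ h1)).trans (tle_gr Y Z W))

lemma tle_iff (T X : BT) : tle T X ↔ Le T X := ⟨Le_of_tle, tle_of_Le T X⟩

lemma Le_node {A R Y Z W : BT} (h1 : Le A (gr Y Z)) (h2 : Le R W) :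
    Le (node A R) (gr Y (node Z W)) := by
  rw [← tle_iff] at *
  exact (tle_right A h2).trans ((tle_left W h1).trans (tle_gr Y Z W))

lemma Le_mir {U V : BT} (h : Le U V) : Le (mir V) (mir U) := by
  rw [← tle_iff] at *
  exact tle_mir h

lemma d_cut_left (Y Z W : BT) (i : ℕ) (h : i < Y.size + Z.size) :
    d (gr Y (node Z W)) i = d (gr Y Z) i := by
  by_cases hY : i < Y.size
  · rw [d_gr_left _ _ _ hY, d_gr_left _ _ _ hY]
  · rw [d_gr_right _ _ _ (by omega), d_gr_right _ _ _ (by omega), d_node_lt (by omega)]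

lemma d_cut_mid (Y Z W : BT) : d (gr Y (node Z W)) (Y.size + Z.size) = Z.size := by
  rw [d_gr_right _ _ _ (by omega), d_node_eq (by omega)]

lemma d_cut_right (Y Z W : BT) (i j : ℕ) (h : i = Y.size + Z.size + 1 + j) :
    d (gr Y (node Z W)) i = d W j := by
  rw [d_gr_right _ _ _ (by omega), d_node_gt (by omega)]
  congr 1; omega

lemma b_cut_left (Y Z W : BT) (i x : ℕ) (h : i < Y.size + Z.size)
    (hx : x + i + 1 ≤ Y.size + Z.size) :
    x ≤ b (gr Y (node Z W)) i ↔ x ≤ b (gr Y Z) i := by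
  by_cases hY : i < Y.size
  · exact b_gr_congr Y _ Z _ _ hY (by simp only [size]; omega) (by omega)
  · rw [b_gr_right _ _ _ (by omega), b_gr_right _ _ _ (by omega), b_node_lt (by omega)]

lemma b_cut_mid (Y Z W : BT) : b (gr Y (node Z W)) (Y.size + Z.size) = W.size := by
  rw [b_gr_right _ _ _ (by omega), b_node_eq (by omega)]

lemma b_cut_right (Y Z W : BT) (i j : ℕ) (h : i = Y.size + Z.size + 1 + j) :
    b (gr Y (node Z W)) i = b W j := by
  rw [b_gr_right _ _ _ (by omega), b_node_gt (by omega)]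
  congr 1; omega

/-- `T` is the upper tree of a self-dual interval. -/
def SD (T : BT) : Prop := Le (mir T) T

lemma SD_iff (T : BT) : SD T ↔ ∀ i, i < T.size → d T (T.size - 1 - i) ≤ b T i := by
  unfold SD Le
  rw [size_mir]
  constructor
  · rintro ⟨_, h⟩ i hi
    rw [← b_mir T i hi]; exact h i hi
  · intro h
    refine ⟨rfl, fun i hi => ?_⟩
    rw [b_mir T i hi]; exact h i hi

lemma Le_mir_iff (Q U : BT) (hs : Q.size = U.size) :
    Le (mir Q) U ↔ ∀ i, i < Q.size → d Q (Q.size - 1 - i) ≤ b U i := by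
  unfold Le
  rw [size_mir]
  constructor
  · rintro ⟨_, h⟩ i hi
    rw [← b_mir Q i hi]; exact h i hi
  · intro h
    refine ⟨hs, fun i hi => ?_⟩
    rw [b_mir Q i hi]; exact h i hi

lemma Le_mir_dual {Q U : BT} (h : Le (mir Q) U) (i : ℕ) (hi : i < Q.size) :
    d U (Q.size - 1 - i) ≤ b Q i := by
  have hs : Q.size = U.size := by rw [← h.1, size_mir]
  have h1 := (Le_mir h).2 i (by rw [size_mir]; omega)
  rw [mir_mir, b_mir U i (by omega)] at h1
  rwa [hs]

lemma SD_mid (P R Q : BT) (hq : Q.size = P.size + R.size) :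
    SD (gr P (node R Q)) ↔ Le (mir Q) (gr P R) := by
  have hn : (gr P (node R Q)).size = 2 * Q.size + 1 := by simp only [size_gr, size]; omega
  rw [SD_iff, hn]
  constructor
  · intro h
    rw [Le_mir_iff _ _ (by rw [size_gr, hq])]
    intro i hi
    have h1 := h i (by omega)
    rw [d_cut_right P R Q _ (Q.size - 1 - i) (by omega)] at h1
    have := d_le Q (Q.size - 1 - i) (by omega)
    rwa [b_cut_left P R Q i _ (by omega) (by omega)] at h1
  · intro h i hi
    have h2 := Le_mir_dual h
    rw [Le_mir_iff _ _ (by rw [size_gr, hq])] at h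
    rcases lt_trichotomy i Q.size with h1 | h1 | h1
    · rw [d_cut_right P R Q _ (Q.size - 1 - i) (by omega)]
      have := d_le Q (Q.size - 1 - i) (by omega)
      rw [b_cut_left P R Q i _ (by omega) (by omega)]
      exact h i h1
    · rw [show 2 * Q.size + 1 - 1 - i = P.size + R.size by omega, d_cut_mid,
        show i = P.size + R.size by omega, b_cut_mid]
      omega
    · rw [d_cut_left _ _ _ _ (by omega), b_cut_right P R Q i (i - Q.size - 1) (by omega)]
      have := h2 (i - Q.size - 1) (by omega)
      convert this using 2; omega

lemma SD_big (Y Z S R Q : BT) (hq : Q.size = Y.size + Z.size) :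
    SD (gr Y (node Z (gr S (node R Q)))) ↔ Le (mir Q) (gr Y Z) ∧ SD (gr S R) := by
  have hW : (gr S (node R Q)).size = S.size + R.size + 1 + Q.size := by
    simp only [size_gr, size]; omega
  have hn : (gr Y (node Z (gr S (node R Q)))).size = 2 * Q.size + 2 + S.size + R.size := by
    simp only [size_gr, size]; omega
  rw [SD_iff, SD_iff, hn, size_gr]
  constructor
  · intro h
    constructor
    · rw [Le_mir_iff _ _ (by rw [size_gr, hq])]
      intro i hi
      have h1 := h i (by omega)
      rw [d_cut_right Y Z _ _ (S.size + R.size + 1 + (Q.size - 1 - i)) (by omega),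
        d_cut_right S R Q _ (Q.size - 1 - i) (by omega)] at h1
      have := d_le Q (Q.size - 1 - i) (by omega)
      rwa [b_cut_left Y Z _ i _ (by omega) (by omega)] at h1
    · intro i hi
      have h1 := h (Q.size + 1 + i) (by omega)
      rw [d_cut_right Y Z _ _ (S.size + R.size - 1 - i) (by omega),
        d_cut_left S R Q _ (by omega), b_cut_right Y Z _ _ i (by omega)] at h1
      have := d_le (gr S R) (S.size + R.size - 1 - i) (by rw [size_gr]; omega)
      rwa [b_cut_left S R Q i _ (by omega) (by omega)] at h1
  · rintro ⟨h, h3⟩ i hi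
    have h2 := Le_mir_dual h
    rw [Le_mir_iff _ _ (by rw [size_gr, hq])] at h
    rcases lt_trichotomy i Q.size with h1 | h1 | h1
    · rw [d_cut_right Y Z _ _ (S.size + R.size + 1 + (Q.size - 1 - i)) (by omega),
        d_cut_right S R Q _ (Q.size - 1 - i) (by omega)]
      have := d_le Q (Q.size - 1 - i) (by omega)
      rw [b_cut_left Y Z _ i _ (by omega) (by omega)]
      exact h i h1
    · rw [d_cut_right Y Z _ _ (S.size + R.size) (by omega), d_cut_mid, h1, hq, b_cut_mid]
      omega
    · rw [b_cut_right Y Z _ _ (i - Q.size - 1) (by omega)]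
      rcases lt_trichotomy (i - Q.size - 1) (S.size + R.size) with h4 | h4 | h4
      · rw [d_cut_right Y Z _ _ (S.size + R.size - 1 - (i - Q.size - 1)) (by omega),
          d_cut_left S R Q _ (by omega)]
        have := d_le (gr S R) (S.size + R.size - 1 - (i - Q.size - 1)) (by rw [size_gr]; omega)
        rw [b_cut_left S R Q _ _ (by omega) (by omega)]
        exact h3 _ h4
      · rw [h4, b_cut_mid,
          show 2 * Q.size + 2 + S.size + R.size - 1 - i = Y.size + Z.size by omega, d_cut_mid]
        omega
      · rw [d_cut_left Y Z _ _ (by omega),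
          b_cut_right S R Q _ (i - Q.size - 1 - S.size - R.size - 1) (by omega)]
        have := h2 (i - Q.size - 1 - S.size - R.size - 1) (by omega)
        convert this using 2; omega

lemma SD_big_exists (P R Q : BT) (h : SD (gr P (node R Q))) (hp : P.size ≤ R.size + 1 + Q.size)
    (hq : Q.size < P.size + R.size) :
    ∃ Y Z S, P = gr Y (node Z S) ∧ Y.size + Z.size = Q.size := by
  rw [SD_iff] at h
  have hn : (gr P (node R Q)).size = P.size + R.size + 1 + Q.size := by
    simp only [size_gr, size]; omega
  rw [hn] at h
  have h1 := h Q.size (by omega)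
  rw [show P.size + R.size + 1 + Q.size - 1 - Q.size = P.size + R.size by omega, d_cut_mid] at h1
  have hQP : Q.size < P.size := by
    by_contra hc
    rw [b_gr_right _ _ _ (by omega), b_node_lt (by omega)] at h1
    have := b_lt R (Q.size - P.size) (by omega)
    omega
  obtain ⟨Y, Z, S, rfl, h2, h3⟩ := exists_cut P Q.size hQP
  refine ⟨Y, Z, S, rfl, ?_⟩
  by_contra hne
  rw [gr_gr, b_gr_right _ _ _ h2, gr, b_node_lt (by omega)] at h1
  have := b_lt Z (Q.size - Y.size) (by omega)
  simp only [size_gr, size] at hp hq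
  omega

open Classical

lemma finite_le (n : ℕ) : {T : BT | T.size ≤ n}.Finite := by
  induction n with
  | zero =>
    refine (Set.finite_singleton leaf).subset ?_
    intro T h
    exact size_eq_zero (by simpa using h)
  | succ n ih =>
    refine ((Set.finite_singleton leaf).union (Set.Finite.image2 node ih ih)).subset ?_
    intro T h
    cases T with
    | leaf => left; rfl
    | node l r =>
      right
      simp only [Set.mem_ofPred_eq, size] at h
      exact ⟨l, by simp only [Set.mem_ofPred_eq]; omega, r, by simp only [Set.mem_ofPred_eq]; omega, rfl⟩

/-- Trees of size `n`. -/
noncomputable def tr (n : ℕ) : Finset BT := (finite_le n).toFinset.filter (fun T => T.size = n)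

lemma mem_tr (n : ℕ) (T : BT) : T ∈ tr n ↔ T.size = n := by
  simp only [tr, Finset.mem_filter, Set.Finite.mem_toFinset, Set.mem_ofPred_eq]
  omega

/-- Intervals of size `n`. -/
noncomputable def intS (n : ℕ) : Finset (BT × BT) :=
  (tr n ×ˢ tr n).filter (fun p => Le p.1 p.2)

lemma mem_intS (n : ℕ) (p : BT × BT) : p ∈ intS n ↔ p.1.size = n ∧ Le p.1 p.2 := by
  simp only [intS, Finset.mem_filter, Finset.mem_product, mem_tr]
  constructor
  · rintro ⟨⟨h1, _⟩, h3⟩; exact ⟨h1, h3⟩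
  · rintro ⟨h1, h3⟩; exact ⟨⟨h1, h3.1 ▸ h1⟩, h3⟩

/-- Upper trees of self-dual intervals of size `n`. -/
noncomputable def sdS (n : ℕ) : Finset BT := (tr n).filter SD

lemma mem_sdS (n : ℕ) (T : BT) : T ∈ sdS n ↔ T.size = n ∧ SD T := by
  simp only [sdS, Finset.mem_filter, mem_tr]

/-- Right spine splittings with bounded upper part. -/
noncomputable def spl : ℕ → BT → Finset (BT × BT)
  | _, leaf => {(leaf, leaf)}
  | c, node l r => insert (leaf, node l r)
      (if l.size + 1 ≤ c then (spl (c - (l.size + 1)) r).image (fun s => (node l s.1, s.2)) else ∅)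

/-- Number of right spine nodes among the first `c` nodes. -/
def sl : ℕ → BT → ℕ
  | _, leaf => 0
  | c, node l r => if l.size + 1 ≤ c then sl (c - (l.size + 1)) r + 1 else 0

lemma mem_spl (T : BT) : ∀ (c : ℕ) (s : BT × BT),
    s ∈ spl c T ↔ gr s.1 s.2 = T ∧ s.1.size ≤ c := by
  induction T with
  | leaf =>
    rintro c ⟨Y, Z⟩
    simp only [spl, Finset.mem_singleton, Prod.mk.injEq]
    cases Y with
    | leaf => simp [gr, size]
    | node l r => simp [gr]
  | node l r _ ih =>
    rintro c ⟨Y, Z⟩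
    simp only [spl, Finset.mem_insert]
    cases Y with
    | leaf =>
      simp only [gr, size]
      split_ifs <;> simp
    | node l' r' =>
      simp only [gr, size, node.injEq, Prod.mk.injEq, reduceCtorEq, false_and, false_or]
      split_ifs with h
      · simp only [Finset.mem_image, ih, Prod.mk.injEq, node.injEq, Prod.exists]
        constructor
        · rintro ⟨y, z, ⟨h1, h2⟩, ⟨rfl, rfl⟩, rfl⟩
          exact ⟨⟨rfl, h1⟩, by omega⟩
        · rintro ⟨⟨rfl, h1⟩, h2⟩
          exact ⟨r', Z, ⟨h1, by omega⟩, ⟨rfl, rfl⟩, rfl⟩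
      · simp only [Finset.notMem_empty, false_iff, not_and]
        rintro ⟨rfl, h1⟩
        omega

open Polynomial

lemma sum_spl (T : BT) : ∀ c : ℕ, ∑ s ∈ spl c T, (X : ℚ[X]) ^ rs s.1 =
    ∑ e ∈ Finset.range (sl c T + 1), (X : ℚ[X]) ^ e := by
  induction T with
  | leaf => intro c; simp [spl, sl, rs]
  | node l r _ ih =>
    intro c
    simp only [spl, sl]
    rw [Finset.sum_insert]
    · split_ifs with h
      · rw [Finset.sum_image]
        · rw [Finset.sum_range_succ']
          simp only [rs, pow_succ, ← Finset.sum_mul, ih]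
          simp [add_comm]
        · rintro ⟨a, b⟩ _ ⟨a', b'⟩ _ h
          simpa using h
      · simp [rs]
    · split_ifs <;> simp

lemma sum_spl_mul (T : BT) (c : ℕ) :
    (X - 1) * ∑ s ∈ spl c T, (X : ℚ[X]) ^ rs s.1 = X * X ^ sl c T - 1 := by
  rw [sum_spl, mul_geom_sum, pow_succ']

lemma sl_gr (P V : BT) : ∀ c, P.size ≤ c → sl c (gr P V) = rs P + sl (c - P.size) V := by
  induction P with
  | leaf => intro c _; simp [gr, rs, size]
  | node l r _ ih =>
    intro c h
    simp only [size] at h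
    simp only [gr, sl, rs, size]
    rw [if_pos (by omega), ih _ (by omega), show c - (l.size + 1) - r.size = c - (l.size + r.size + 1) by omega]
    omega

lemma sl_of_le (T : BT) (c : ℕ) (h : T.size ≤ c) : sl c T = rs T := by
  have := sl_gr T leaf c h
  have h2 : gr T leaf = T := by
    clear this h
    induction T with
    | leaf => rfl
    | node l r _ ih => simp [gr, ih]
  simpa [h2, sl] using this

lemma sl_cut (P R Q : BT) (c : ℕ) (h : P.size ≤ c) (h2 : c ≤ P.size + R.size) :
    sl c (gr P (node R Q)) = rs P := by
  rw [sl_gr _ _ _ h, sl, if_neg (by omega)]; rfl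

noncomputable def Fp (n : ℕ) : ℚ[X] := ∑ p ∈ intS n, X ^ rs p.2
noncomputable def DFp (n : ℕ) : ℚ[X] := ∑ p ∈ intS n, ∑ s ∈ spl n p.2, X ^ rs s.1
noncomputable def Sp (n : ℕ) : ℚ[X] := ∑ T ∈ sdS n, X ^ sl (n / 2) T
noncomputable def DSp (n : ℕ) : ℚ[X] := ∑ T ∈ sdS n, ∑ s ∈ spl (n / 2) T, X ^ rs s.1

lemma DFp_eq (n : ℕ) : (X - 1) * DFp n = X * Fp n - C ((Fp n).eval 1) := by
  unfold DFp Fp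
  simp only [Finset.mul_sum, eval_finsetSum, eval_pow, eval_X, one_pow, map_sum, map_one]
  rw [← Finset.sum_sub_distrib]
  refine Finset.sum_congr rfl fun p hp => ?_
  rw [mem_intS] at hp
  rw [← Finset.mul_sum, sum_spl_mul, sl_of_le _ _ (by rw [← hp.2.1, hp.1])]

lemma DSp_eq (n : ℕ) : (X - 1) * DSp n = X * Sp n - C ((Sp n).eval 1) := by
  unfold DSp Sp
  simp only [Finset.mul_sum, eval_finsetSum, eval_pow, eval_X, one_pow, map_sum, map_one]
  rw [← Finset.sum_sub_distrib]
  refine Finset.sum_congr rfl fun p hp => ?_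
  rw [← Finset.mul_sum, sum_spl_mul]

lemma Sp_eval (n : ℕ) : (Sp n).eval 1 = (sdS n).card := by
  simp [Sp, eval_finsetSum]

/-- pairs (interval, splitting of the upper tree) -/
noncomputable def J (n : ℕ) : Finset (Σ _ : BT × BT, BT × BT) :=
  (intS n).sigma (fun p => spl n p.2)

/-- pairs (self-dual tree, splitting) -/
noncomputable def E (n : ℕ) : Finset (Σ _ : BT, BT × BT) :=
  (sdS n).sigma (fun T => spl (n / 2) T)

lemma DFp_J (n : ℕ) : DFp n = ∑ x ∈ J n, X ^ rs x.2.1 := by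
  rw [J, Finset.sum_sigma]; rfl

lemma DSp_E (n : ℕ) : DSp n = ∑ x ∈ E n, X ^ rs x.2.1 := by
  rw [E, Finset.sum_sigma]; rfl

lemma mem_J (n : ℕ) (A U Y Z : BT) : (⟨(A, U), (Y, Z)⟩ : Σ _ : BT × BT, BT × BT) ∈ J n ↔
    A.size = n ∧ Le A (gr Y Z) ∧ U = gr Y Z := by
  simp only [J, Finset.mem_sigma, mem_intS, mem_spl]
  constructor
  · rintro ⟨⟨h1, h2⟩, rfl, h3⟩; exact ⟨h1, h2, rfl⟩
  · rintro ⟨h1, h2, rfl⟩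
    refine ⟨⟨h1, h2⟩, rfl, ?_⟩
    have := h2.1
    rw [size_gr] at this
    omega

lemma mem_E (n : ℕ) (T S R : BT) : (⟨T, (S, R)⟩ : Σ _ : BT, BT × BT) ∈ E n ↔
    S.size + R.size = n ∧ SD (gr S R) ∧ S.size ≤ R.size ∧ T = gr S R := by
  simp only [E, Finset.mem_sigma, mem_sdS, mem_spl]
  constructor
  · rintro ⟨⟨h1, h2⟩, rfl, h3⟩; rw [size_gr] at h1; exact ⟨h1, h2, by omega, rfl⟩
  · rintro ⟨h1, h2, h3, rfl⟩
    rw [size_gr]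
    exact ⟨⟨h1, h2⟩, rfl, by omega⟩

lemma Fp_zero : Fp 0 = 1 := by
  have : intS 0 = {(leaf, leaf)} := by
    ext ⟨A, B⟩
    rw [mem_intS, Finset.mem_singleton, Prod.mk.injEq]
    constructor
    · rintro ⟨h1, h2⟩
      exact ⟨size_eq_zero h1, size_eq_zero (h2.1 ▸ h1)⟩
    · rintro ⟨rfl, rfl⟩
      exact ⟨rfl, rfl, fun _ _ => le_refl _⟩
  rw [Fp, this]; simp [rs]

lemma Sp_zero : Sp 0 = 1 := by
  have : sdS 0 = {leaf} := by
    ext A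
    rw [mem_sdS, Finset.mem_singleton]
    constructor
    · rintro ⟨h1, h2⟩
      exact size_eq_zero h1
    · rintro rfl
      exact ⟨rfl, rfl, fun _ _ => le_refl _⟩
  rw [Sp, this]; simp [sl]

lemma Fp_succ (n : ℕ) : Fp (n + 1) =
    ∑ ij ∈ Finset.HasAntidiagonal.antidiagonal n, X * DFp ij.1 * Fp ij.2 := by
  have h : ∀ ij : ℕ × ℕ, X * DFp ij.1 * Fp ij.2 =
      ∑ x ∈ J ij.1 ×ˢ intS ij.2, X * X ^ rs x.1.2.1 * X ^ rs x.2.2 := by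
    intro ij
    rw [DFp_J, Fp, Finset.mul_sum (J ij.1) _ X, Finset.sum_mul_sum, Finset.sum_product]
  simp only [h]
  rw [Finset.sum_sigma', Fp]
  symm
  refine Finset.sum_nbij
    (fun x => (node x.2.1.1.1 x.2.2.1, gr x.2.1.2.1 (node x.2.1.2.2 x.2.2.2))) ?_ ?_ ?_ ?_
  · rintro ⟨⟨i, j⟩, ⟨⟨⟨A, U⟩, ⟨Y, Z⟩⟩, ⟨R, W⟩⟩⟩ hx
    simp only [Finset.mem_sigma, Finset.HasAntidiagonal.mem_antidiagonal, Finset.mem_product, mem_J, mem_intS] at hx ⊢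
    obtain ⟨h1, ⟨h2, h3, h4⟩, h5, h6⟩ := hx
    exact ⟨by simp only [size]; omega, Le_node h3 h6⟩
  · rintro ⟨⟨i, j⟩, ⟨⟨⟨A, U⟩, ⟨Y, Z⟩⟩, ⟨R, W⟩⟩⟩ hx ⟨⟨i', j'⟩, ⟨⟨⟨A', U'⟩, ⟨Y', Z'⟩⟩, ⟨R', W'⟩⟩⟩ hx' he
    simp only [Finset.coe_sigma, Set.mem_sigma_iff, Finset.mem_coe, Finset.HasAntidiagonal.mem_antidiagonal, Finset.mem_product, mem_J, mem_intS] at hx hx'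
    simp only [Prod.mk.injEq, node.injEq] at he
    obtain ⟨h1, ⟨rfl, h3, rfl⟩, rfl, h6⟩ := hx
    obtain ⟨h1', ⟨rfl, h3', rfl⟩, rfl, h6'⟩ := hx'
    obtain ⟨⟨rfl, rfl⟩, he⟩ := he
    have e1 := h3.1
    have e2 := h3'.1
    rw [size_gr] at e1 e2
    obtain ⟨rfl, rfl, rfl⟩ := cut_unique _ _ _ _ _ _ A.size he (by omega) (by omega) (by omega) (by omega)
    rfl
  · rintro ⟨T, V⟩ hx
    rw [Finset.mem_coe, mem_intS] at hx
    obtain ⟨h1, h2⟩ := hx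
    simp only at h1 h2
    cases T with
    | leaf => simp [size] at h1
    | node A R =>
      obtain ⟨Y, Z, W, rfl, h3, h4, h5⟩ := Le_cut h2
      simp only [size] at h1
      refine ⟨⟨(A.size, R.size), ⟨⟨⟨A, gr Y Z⟩, ⟨Y, Z⟩⟩, ⟨R, W⟩⟩⟩, ?_, rfl⟩
      simp only [Finset.coe_sigma, Set.mem_sigma_iff, Finset.mem_coe, Finset.HasAntidiagonal.mem_antidiagonal, Finset.mem_product, mem_J, mem_intS]
      exact ⟨by omega, ⟨trivial, h4, trivial⟩, trivial, h5⟩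
  · rintro ⟨⟨i, j⟩, ⟨⟨⟨A, U⟩, ⟨Y, Z⟩⟩, ⟨R, W⟩⟩⟩ hx
    simp only [rs_gr, rs]
    ring

/-- The root path of `T` meets the middle node first. -/
def isMid (T : BT) : Prop := ∃ P R Q, T = gr P (node R Q) ∧ Q.size = P.size + R.size

lemma sum_mid (k : ℕ) : ∑ T ∈ (sdS (2 * k + 1)).filter isMid, (X : ℚ[X]) ^ sl ((2 * k + 1) / 2) T
    = DFp k := by
  rw [DFp_J]
  symm
  refine Finset.sum_nbij (fun x => gr x.2.1 (node x.2.2 (mir x.1.1))) ?_ ?_ ?_ ?_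
  · rintro ⟨⟨A, U⟩, ⟨Y, Z⟩⟩ hx
    rw [mem_J] at hx
    obtain ⟨rfl, h2, rfl⟩ := hx
    have e1 := h2.1
    rw [size_gr] at e1
    rw [Finset.mem_filter, mem_sdS, SD_mid _ _ _ (by rw [size_mir, e1]), mir_mir]
    refine ⟨⟨?_, h2⟩, _, _, _, rfl, by rw [size_mir, e1]⟩
    simp only [size_gr, size, size_mir]; omega
  · rintro ⟨⟨A, U⟩, ⟨Y, Z⟩⟩ hx ⟨⟨A', U'⟩, ⟨Y', Z'⟩⟩ hx' he
    rw [Finset.mem_coe, mem_J] at hx hx'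
    obtain ⟨h1, h2, rfl⟩ := hx
    obtain ⟨h1', h2', rfl⟩ := hx'
    have e1 := h2.1
    have e2 := h2'.1
    rw [size_gr] at e1 e2
    obtain ⟨rfl, rfl, h3⟩ := cut_unique _ _ _ _ _ _ k he (by simp only; omega) (by simp only; omega) (by simp only; omega) (by simp only; omega)
    simp only at h3
    have := congrArg mir h3
    rw [mir_mir, mir_mir] at this
    subst this
    rfl
  · rintro T hT
    rw [Finset.mem_coe, Finset.mem_filter, mem_sdS] at hT
    obtain ⟨⟨h1, h2⟩, P, R, Q, rfl, h3⟩ := hT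
    rw [SD_mid _ _ _ h3] at h2
    simp only [size_gr, size] at h1
    refine ⟨⟨(mir Q, gr P R), (P, R)⟩, ?_, ?_⟩
    · rw [Finset.mem_coe, mem_J, size_mir]
      exact ⟨by omega, h2, rfl⟩
    · simp only [mir_mir]
  · rintro ⟨⟨A, U⟩, ⟨Y, Z⟩⟩ hx
    rw [mem_J] at hx
    obtain ⟨h1, h2, rfl⟩ := hx
    have e1 := h2.1
    rw [size_gr] at e1
    simp only
    rw [sl_cut _ _ _ _ (by omega) (by omega)]

lemma sum_big (k m : ℕ) (hm : m ≤ 1) :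
    ∑ T ∈ (sdS (m + 2 * (k + 1))).filter (fun T => ¬ isMid T),
      (X : ℚ[X]) ^ sl ((m + 2 * (k + 1)) / 2) T
    = ∑ ij ∈ Finset.HasAntidiagonal.antidiagonal k, X * DFp ij.1 * DSp (m + 2 * ij.2) := by
  have h : ∀ ij : ℕ × ℕ, X * DFp ij.1 * DSp (m + 2 * ij.2) =
      ∑ x ∈ J ij.1 ×ˢ E (m + 2 * ij.2), X * X ^ rs x.1.2.1 * X ^ rs x.2.2.1 := by
    intro ij
    rw [DFp_J, DSp_E, Finset.mul_sum (J ij.1) _ X, Finset.sum_mul_sum, Finset.sum_product]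
  simp only [h]
  rw [Finset.sum_sigma']
  symm
  refine Finset.sum_nbij (fun x => gr x.2.1.2.1 (node x.2.1.2.2
    (gr x.2.2.2.1 (node x.2.2.2.2 (mir x.2.1.1.1))))) ?_ ?_ ?_ ?_
  · rintro ⟨⟨i, j⟩, ⟨⟨⟨A, U⟩, ⟨Y, Z⟩⟩, ⟨T, ⟨S, R⟩⟩⟩⟩ hx
    simp only [Finset.mem_sigma, Finset.HasAntidiagonal.mem_antidiagonal, Finset.mem_product, mem_J, mem_E] at hx ⊢
    obtain ⟨h1, ⟨h2, h3, rfl⟩, h5, h6, h7, rfl⟩ := hx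
    have e1 := h3.1
    rw [size_gr] at e1
    rw [Finset.mem_filter, mem_sdS, SD_big _ _ _ _ _ (by rw [size_mir, e1]), mir_mir]
    refine ⟨⟨?_, h3, h6⟩, ?_⟩
    · simp only [size_gr, size, size_mir]; omega
    · rintro ⟨P', R', Q', he, hq⟩
      have hs := congrArg size he
      have he' : gr (gr Y (node Z S)) (node R (mir A)) = gr P' (node R' Q') := by
        rw [← he, gr_gr]; rfl
      simp only [size_gr, size, size_mir] at hs
      obtain ⟨rfl, rfl, rfl⟩ := cut_unique _ _ _ _ _ _ ((m + 2 * (k + 1)) / 2) he'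
        (by simp only [size_gr, size]; omega) (by simp only [size_gr, size]; omega)
        (by omega) (by omega)
      simp only [size_gr, size, size_mir] at hq
      omega
  · rintro ⟨⟨i, j⟩, ⟨⟨⟨A, U⟩, ⟨Y, Z⟩⟩, ⟨T, ⟨S, R⟩⟩⟩⟩ hx ⟨⟨i', j'⟩, ⟨⟨⟨A', U'⟩, ⟨Y', Z'⟩⟩, ⟨T', ⟨S', R'⟩⟩⟩⟩ hx' he
    simp only [Finset.coe_sigma, Set.mem_sigma_iff, Finset.mem_coe, Finset.HasAntidiagonal.mem_antidiagonal, Finset.mem_product, mem_J, mem_E] at hx hx'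
    simp only at he
    obtain ⟨h1, ⟨h2, h3, rfl⟩, h5, h6, h7, rfl⟩ := hx
    obtain ⟨h1', ⟨h2', h3', rfl⟩, h5', h6', h7', rfl⟩ := hx'
    have e1 := h3.1
    have e2 := h3'.1
    rw [size_gr] at e1 e2
    have he' : gr (gr Y (node Z S)) (node R (mir A)) = gr (gr Y' (node Z' S')) (node R' (mir A')) := by
      rw [gr_gr, gr_gr]; exact he
    obtain ⟨hP, rfl, hA⟩ := cut_unique _ _ _ _ _ _ ((m + 2 * (k + 1)) / 2) he'
        (by simp only [size_gr, size]; omega) (by simp only [size_gr, size]; omega)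
        (by simp only [size_gr, size]; omega) (by simp only [size_gr, size]; omega)
    have := congrArg mir hA
    rw [mir_mir, mir_mir] at this
    subst this
    obtain ⟨rfl, rfl, rfl⟩ := cut_unique _ _ _ _ _ _ A.size hP
      (by omega) (by omega) (by omega) (by omega)
    have : i = i' := by omega
    subst this
    have : j = j' := by omega
    subst this
    rfl
  · rintro T hT
    rw [Finset.mem_coe, Finset.mem_filter, mem_sdS] at hT
    obtain ⟨⟨h1, h2⟩, h3⟩ := hT
    obtain ⟨P, R, Q, rfl, h4, h5⟩ := exists_cut T ((m + 2 * (k + 1)) / 2) (by omega)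
    have h1' := h1
    simp only [size_gr, size] at h1'
    have h6 : Q.size ≠ P.size + R.size := fun h => h3 ⟨P, R, Q, rfl, h⟩
    obtain ⟨Y, Z, S, rfl, h7⟩ := SD_big_exists P R Q h2 (by omega) (by omega)
    rw [gr_gr, gr, SD_big _ _ _ _ _ h7.symm] at h2
    simp only [size_gr, size] at h1' h4 h5
    refine ⟨⟨(Q.size, k - Q.size), ⟨⟨⟨mir Q, gr Y Z⟩, ⟨Y, Z⟩⟩, ⟨gr S R, ⟨S, R⟩⟩⟩⟩, ?_, ?_⟩
    · simp only [Finset.coe_sigma, Set.mem_sigma_iff, Finset.mem_coe, Finset.HasAntidiagonal.mem_antidiagonal, Finset.mem_product, mem_J, mem_E, size_mir]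
      exact ⟨by omega, ⟨trivial, h2.1, trivial⟩, by omega, h2.2, by omega, trivial⟩
    · simp only [mir_mir]
      rw [gr_gr]; rfl
  · rintro ⟨⟨i, j⟩, ⟨⟨⟨A, U⟩, ⟨Y, Z⟩⟩, ⟨T, ⟨S, R⟩⟩⟩⟩ hx
    simp only [Finset.mem_sigma, Finset.HasAntidiagonal.mem_antidiagonal, Finset.mem_product, mem_J, mem_E] at hx ⊢
    obtain ⟨h1, ⟨h2, h3, rfl⟩, h5, h6, h7, rfl⟩ := hx
    have e1 := h3.1
    rw [size_gr] at e1
    have he' : gr Y (node Z (gr S (node R (mir A)))) = gr (gr Y (node Z S)) (node R (mir A)) := by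
      rw [gr_gr]; rfl
    rw [he', sl_cut _ _ _ _ (by simp only [size_gr, size]; omega)
      (by simp only [size_gr, size]; omega), rs_gr, rs]
    ring

lemma not_mid_even (k : ℕ) (T : BT) (h : T ∈ sdS (2 * k)) : ¬ isMid T := by
  rintro ⟨P, R, Q, rfl, h2⟩
  rw [mem_sdS] at h
  have := h.1
  simp only [size_gr, size] at this
  omega

lemma Sp_even (k : ℕ) : Sp (2 * (k + 1)) =
    ∑ ij ∈ Finset.HasAntidiagonal.antidiagonal k, X * DFp ij.1 * DSp (2 * ij.2) := by
  have := sum_big k 0 (by omega)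
  simp only [zero_add] at this
  rw [← this, Sp, Finset.filter_true_of_mem (fun T hT => not_mid_even _ T hT)]

lemma Sp_odd (k : ℕ) : Sp (2 * (k + 1) + 1) = DFp (k + 1) +
    ∑ ij ∈ Finset.HasAntidiagonal.antidiagonal k, X * DFp ij.1 * DSp (2 * ij.2 + 1) := by
  have := sum_big k 1 (by omega)
  simp only [add_comm 1] at this
  rw [← this, ← sum_mid, Sp, Finset.sum_filter_add_sum_filter_not]

lemma Sp_one : Sp 1 = DFp 0 := by
  have := sum_mid 0
  rw [← this, Sp, Finset.filter_true_of_mem]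
  intro T hT
  rw [mul_zero, zero_add, mem_sdS] at hT
  cases T with
  | leaf => simp [size] at hT
  | node l r =>
    refine ⟨leaf, l, r, rfl, ?_⟩
    have := hT.1
    simp only [size] at *
    omega

lemma ncard_eq (n : ℕ) :
    Set.ncard {p : BT × BT | BT.interval p n ∧ BT.selfDual p} = (sdS n).card := by
  rw [← Set.ncard_coe_finset]
  symm
  refine Set.ncard_congr (fun T _ => (mir T, T)) ?_ ?_ ?_
  · intro T hT
    rw [Finset.mem_coe, mem_sdS] at hT
    refine ⟨⟨by rw [size_mir]; exact hT.1, hT.1, (tle_iff _ _).2 hT.2⟩, rfl, mir_mir T⟩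
  · intro T T' _ _ h
    exact (Prod.mk.inj h).2
  · rintro ⟨A, T⟩ ⟨⟨h1, h2, h3⟩, h4, h5⟩
    simp only at h1 h2 h3 h4 h5
    subst h4
    refine ⟨T, ?_, rfl⟩
    rw [Finset.mem_coe, mem_sdS]
    exact ⟨h2, (tle_iff _ _).1 h3⟩

end BT

namespace SDAlg

open PowerSeries

lemma exists_fix {R : Type*} [CommRing R] (f : R⟦X⟧ → R⟦X⟧)
    (hf : ∀ n u v, (X : R⟦X⟧) ^ n ∣ u - v → (X : R⟦X⟧) ^ (n + 1) ∣ f u - f v) :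
    ∃ B, B = f B := by
  have h1 : ∀ n j, (X : R⟦X⟧) ^ n ∣ f^[n + j] 0 - f^[n] 0 := by
    intro n
    induction n with
    | zero => intro j; simp
    | succ n ih =>
      intro j
      rw [show n + 1 + j = (n + j) + 1 by omega, Function.iterate_succ_apply',
        Function.iterate_succ_apply']
      exact hf _ _ _ (ih j)
  let B : R⟦X⟧ := PowerSeries.mk fun n => coeff n (f^[n + 1] 0)
  have h2 : ∀ n, (X : R⟦X⟧) ^ n ∣ B - f^[n] 0 := by
    intro n
    rw [X_pow_dvd_iff]
    intro m hm
    have := h1 (m + 1) (n - (m + 1))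
    rw [X_pow_dvd_iff] at this
    have := this m (by omega)
    rw [show m + 1 + (n - (m + 1)) = n by omega, map_sub] at this
    rw [map_sub, coeff_mk]
    linear_combination -this
  refine ⟨B, ?_⟩
  ext n
  have h3 := h2 (n + 1)
  have h4 := hf _ _ _ (h2 n)
  rw [← Function.iterate_succ_apply' f] at h4
  have h5 := dvd_sub h3 h4
  rw [X_pow_dvd_iff] at h5
  have := h5 n (by omega)
  simp only [map_sub] at this
  linear_combination this

lemma exists_B : ∃ B : ℚ⟦X⟧, B = 1 + X * B ^ 4 := by
  refine exists_fix (fun B => 1 + X * B ^ 4) ?_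
  intro n u v h
  rw [show (1 + X * u ^ 4) - (1 + X * v ^ 4) = X * (u ^ 4 - v ^ 4) by ring, pow_succ']
  exact mul_dvd_mul_left _ (h.trans (sub_dvd_pow_sub_pow u v 4))

lemma exists_C {R : Type*} [CommRing R] (a : R⟦X⟧) : ∃ C : R⟦X⟧, C = 1 + X * a * C ^ 2 := by
  refine exists_fix (fun C => 1 + X * a * C ^ 2) ?_
  intro n u v h
  rw [show (1 + X * a * u ^ 2) - (1 + X * a * v ^ 2) = X * (a * (u ^ 2 - v ^ 2)) by ring, pow_succ']
  exact mul_dvd_mul_left _ ((h.trans (sub_dvd_pow_sub_pow u v 2)).mul_left _)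

lemma raney (B : ℚ⟦X⟧) (hB : B = 1 + X * B ^ 4) (k : ℕ) : ∀ r : ℕ,
    (4 * k + r : ℚ) * coeff k (B ^ r) = r * Nat.choose (4 * k + r) k := by
  induction k with
  | zero =>
    intro r
    have : constantCoeff B = 1 := by
      rw [hB]; simp
    simp [this]
  | succ k ihk =>
    intro r
    induction r with
    | zero => simp [coeff_one]
    | succ r ih =>
      have h1 : B ^ (r + 1) = B ^ r + X * B ^ (r + 4) := by
        have : B ^ (r + 1) = B ^ r * (1 + X * B ^ 4) := by rw [pow_succ, ← hB]
        rw [this]; ring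
      have h2 := ihk (r + 4)
      rw [h1, map_add, coeff_succ_X_mul]
      have h3 := Nat.choose_succ_succ (4 * k + r + 4) k
      have h4 := Nat.choose_succ_right_eq (4 * k + r + 4) k
      rw [show 4 * k + r + 4 - k = 3 * k + r + 4 by omega] at h4
      rw [show 4 * k + (r + 4) = 4 * k + r + 4 by omega] at h2
      rw [show 4 * (k + 1) + r = 4 * k + r + 4 by omega] at ih
      rw [show 4 * (k + 1) + (r + 1) = (4 * k + r + 4).succ by omega, h3]
      have h4' := congrArg (Nat.cast : ℕ → ℚ) h4
      push_cast at *
      generalize (coeff (k + 1)) (B ^ r) = p at *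
      generalize (coeff k) (B ^ (r + 4)) = q at *
      generalize (Nat.choose (4 * k + r + 4) k : ℚ) = c at *
      generalize (Nat.choose (4 * k + r + 4) (k + 1) : ℚ) = c' at *
      have hN : (4 * k + r + 4 : ℚ) ≠ 0 := by positivity
      apply mul_left_cancel₀ hN
      linear_combination (4 * k + r + 5 : ℚ) * ih + (4 * k + r + 5 : ℚ) * h2 - 4 * h4'

section field
variable {K : Type*} [Field K] (t x B C : K)

lemma field_x (ht : t ≠ 0) (hB0 : B ≠ 0) (hC0 : C ≠ 0) (hB : B = 1 + t * B ^ 4)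
    (hC : C = 1 + t * (B ^ 2 * x) * C ^ 2) :
    B - 1 ≠ 0 ∧ t = (B - 1) / B ^ 4 ∧ x = (C - 1) * B ^ 2 / ((B - 1) * C ^ 2) := by
  have h1 : B - 1 ≠ 0 := by
    have : B - 1 = t * B ^ 4 := by linear_combination hB
    rw [this]; positivity
  refine ⟨h1, ?_, ?_⟩
  · field_simp; linear_combination -hB
  · field_simp
    linear_combination (-B^2) * hC + (x * C ^ 2) * hB

lemma field_F (ht : t ≠ 0) (hB0 : B ≠ 0) (hC0 : C ≠ 0) (hB : B = 1 + t * B ^ 4)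
    (hC : C = 1 + t * (B ^ 2 * x) * C ^ 2) (F : K) (hF : F = B * C - (B - 1) * C ^ 2) :
    (x - 1) * (F - 1) = t * x * (x * F - (2 * B ^ 2 - B ^ 3)) * F := by
  obtain ⟨h1, h2, h3⟩ := field_x t x B C ht hB0 hC0 hB hC
  clear hB hC
  rw [h2, h3, hF]
  field_simp
  ring

lemma field_H (ht : t ≠ 0) (hB0 : B ≠ 0) (hC0 : C ≠ 0) (hB : B = 1 + t * B ^ 4)
    (hC : C = 1 + t * (B ^ 2 * x) * C ^ 2) (F : K) (hF : F = B * C - (B - 1) * C ^ 2)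
    (Ei : K) (hE : (B - (B - 1) * C ^ 2) * Ei = 1)
    (H : K) (hH : H = 1 + B * (C - 1) * (1 - (B - 1) * C) * Ei) :
    (x - 1) * (H - 1) * F = (F - 1) * (x * H - B) := by
  obtain ⟨h1, h2, h3⟩ := field_x t x B C ht hB0 hC0 hB hC
  clear hB hC
  obtain ⟨E, hEd⟩ : ∃ E, E = B - (B - 1) * C ^ 2 := ⟨_, rfl⟩
  rw [← hEd] at hE
  have hE0 : E ≠ 0 := left_ne_zero_of_mul_eq_one hE
  have hE' : Ei = 1 / E := by field_simp; linear_combination hE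
  rw [hH, h3, hF, hE']
  field_simp
  rw [hEd]
  ring

lemma field_K (ht : t ≠ 0) (hB0 : B ≠ 0) (hC0 : C ≠ 0) (hB : B = 1 + t * B ^ 4)
    (hC : C = 1 + t * (B ^ 2 * x) * C ^ 2) (F : K) (hF : F = B * C - (B - 1) * C ^ 2)
    (Ei : K) (hE : (B - (B - 1) * C ^ 2) * Ei = 1)
    (H : K) (hH : H = B ^ 2 * C ^ 2 * (1 - (B - 1) * C) * Ei) :
    (x - 1) * H * F = (x * F - (2 * B ^ 2 - B ^ 3)) * F + (F - 1) * (x * H - B ^ 3) := by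
  obtain ⟨h1, h2, h3⟩ := field_x t x B C ht hB0 hC0 hB hC
  clear hB hC
  obtain ⟨E, hEd⟩ : ∃ E, E = B - (B - 1) * C ^ 2 := ⟨_, rfl⟩
  rw [← hEd] at hE
  have hE0 : E ≠ 0 := left_ne_zero_of_mul_eq_one hE
  have hE' : Ei = 1 / E := by field_simp; linear_combination hE
  rw [hH, h3, hF, hE']
  field_simp
  rw [hEd]
  ring

end field

/-- The ring `ℚ[x][[t]]`. -/
abbrev A := (Polynomial ℚ)⟦X⟧

/-- specialisation `x = 1` -/
noncomputable def ev : A →+* A :=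
  PowerSeries.map ((Polynomial.C).comp (Polynomial.evalRingHom (1 : ℚ)))

/-- catalytic variable -/
noncomputable def xx : A := PowerSeries.C Polynomial.X

lemma ev_X : ev X = X := by simp [ev]
lemma ev_xx : ev xx = 1 := by simp [ev, xx]

lemma coeff_xx_sub (δ : A) (m : ℕ) :
    coeff m ((xx - 1) * δ) = (Polynomial.X - 1) * coeff m δ := by
  rw [sub_mul, one_mul, map_sub, xx, coeff_C_mul, sub_mul, one_mul]

lemma X_sub_ne : (Polynomial.X - 1 : Polynomial ℚ) ≠ 0 := by
  rw [← Polynomial.C_1]; exact Polynomial.X_sub_C_ne_zero 1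

lemma xx_sub_ne : (xx - 1 : A) ≠ 0 := by
  intro h
  have := coeff_xx_sub 1 0
  rw [h] at this
  simp at this
  exact X_sub_ne this.symm

lemma uniq (δ α β : A) (h : (xx - 1) * δ = X * (α * δ + β * ev δ)) : δ = 0 := by
  have h1 : ∀ n, (X : A) ^ n ∣ δ := by
    intro n
    induction n with
    | zero => simp
    | succ n ih =>
      obtain ⟨e, he⟩ := ih
      have h2 : (xx - 1) * δ = X ^ (n + 1) * (α * e + β * ev e) := by
        rw [h, he, map_mul, map_pow, ev_X]; ring
      have h3 : (X : A) ^ (n + 1) ∣ (xx - 1) * δ := ⟨_, h2⟩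
      rw [X_pow_dvd_iff] at h3 ⊢
      intro m hm
      have := h3 m hm
      rw [coeff_xx_sub] at this
      exact (mul_eq_zero.1 this).resolve_left X_sub_ne
  ext1 n
  have := h1 (n + 1)
  rw [X_pow_dvd_iff] at this
  rw [this n (by omega), map_zero]

theorem solve (B0 : ℚ⟦X⟧) (hB0 : B0 = 1 + X * B0 ^ 4) (F DF H DH K DK : A)
    (hDF : (xx - 1) * DF = xx * F - ev F)
    (hDH : (xx - 1) * DH = xx * H - ev H)
    (hDK : (xx - 1) * DK = xx * K - ev K)
    (hF : F = 1 + X * (xx * DF * F))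
    (hH : H = 1 + X * (xx * DF * DH))
    (hK : K = DF + X * (xx * DF * DK)) :
    ev H = PowerSeries.map Polynomial.C B0 ∧ ev K = PowerSeries.map Polynomial.C (B0 ^ 3) := by
  rw [map_pow]
  obtain ⟨B, hBd⟩ : ∃ B : A, B = PowerSeries.map Polynomial.C B0 := ⟨_, rfl⟩
  rw [← hBd]
  have hB : B = 1 + X * B ^ 4 := by
    rw [hBd]
    conv_lhs => rw [hB0]
    simp
  have evB : ev B = B := by
    rw [hBd, ev]
    ext n
    simp
  clear hBd hB0
  obtain ⟨C, hC⟩ := exists_C (B ^ 2 * xx : A)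
  have cB : constantCoeff B = 1 := by rw [hB]; simp
  have cC : constantCoeff C = 1 := by rw [hC]; simp
  have B_ne : B ≠ 0 := by rintro rfl; simp at cB
  have C_ne : C ≠ 0 := by rintro rfl; simp at cC
  have evC : ev C = B := by
    have h1 := congrArg ev hC
    simp only [map_add, map_one, map_mul, map_pow, ev_X, ev_xx, evB] at h1
    have h2 : (1 - X * (B ^ 2 * (ev C + B))) * (ev C - B) = 0 := by
      linear_combination h1 - hB
    rcases mul_eq_zero.1 h2 with h3 | h3
    · have := congrArg constantCoeff h3
      simp at this
    · exact sub_eq_zero.1 h3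
  -- the inverse
  have hu : IsUnit (B - (B - 1) * C ^ 2) := by
    rw [isUnit_iff_constantCoeff]
    simp [cB]
  obtain ⟨Ei, hE⟩ := hu.exists_right_inv
  have evE : (B - (B - 1) * B ^ 2) * ev Ei = 1 := by
    have := congrArg ev hE
    simpa only [map_sub, map_one, map_mul, map_pow, evB, evC] using this
  -- transfer to the fraction field
  let φ := algebraMap A (FractionRing A)
  have φi : Function.Injective φ := IsFractionRing.injective A (FractionRing A)
  have nz : ∀ {a : A}, a ≠ 0 → φ a ≠ 0 := fun h h' => h (φi (by rw [h', map_zero]))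
  have ft : φ X ≠ 0 := nz X_ne_zero
  have fB : φ B = 1 + φ X * φ B ^ 4 := by
    conv_lhs => rw [hB]
    simp only [map_add, map_one, map_mul, map_pow]
  have fC : φ C = 1 + φ X * (φ B ^ 2 * φ xx) * φ C ^ 2 := by
    conv_lhs => rw [hC]
    simp only [map_add, map_one, map_mul, map_pow]
  have fE : (φ B - (φ B - 1) * φ C ^ 2) * φ Ei = 1 := by
    have := congrArg φ hE
    simpa only [map_sub, map_one, map_mul, map_pow] using this
  obtain ⟨F', hF'⟩ : ∃ F', F' = B * C - (B - 1) * C ^ 2 := ⟨_, rfl⟩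
  have fF : φ F' = φ B * φ C - (φ B - 1) * φ C ^ 2 := by
    rw [hF']; simp only [map_sub, map_one, map_mul, map_pow]
  have evF' : ev F' = 2 * B ^ 2 - B ^ 3 := by
    rw [hF']; simp only [map_sub, map_one, map_mul, map_pow, evB, evC]; ring
  have eF' : (xx - 1) * (F' - 1) = X * xx * (xx * F' - (2 * B ^ 2 - B ^ 3)) * F' := by
    apply φi
    have := field_F (φ X) (φ xx) (φ B) (φ C) ft (nz B_ne) (nz C_ne) fB fC (φ F') fF
    simpa only [map_sub, map_one, map_mul, map_pow, map_ofNat] using this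
  have hFF : F = F' := by
    rw [← sub_eq_zero]
    apply uniq _ (xx * (xx * F + xx * F' - ev F')) (- xx * F)
    rw [map_sub, evF']
    linear_combination (xx - 1) * hF + X * xx * F * hDF - eF'
  subst hFF
  have evF := evF'
  rw [evF] at hDF
  have F_ne : F ≠ 0 := by
    rintro rfl
    have := congrArg constantCoeff hF
    simp at this
  obtain ⟨H', hH'⟩ : ∃ H', H' = 1 + B * (C - 1) * (1 - (B - 1) * C) * Ei := ⟨_, rfl⟩
  have evH' : ev H' = B := by
    rw [hH']; simp only [map_add, map_sub, map_one, map_mul, evB, evC]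
    linear_combination (B - 1) * evE
  have eH' : (xx - 1) * (H' - 1) * F = (F - 1) * (xx * H' - B) := by
    apply φi
    have := field_H (φ X) (φ xx) (φ B) (φ C) ft (nz B_ne) (nz C_ne) fB fC (φ F) fF (φ Ei) fE
      (φ H') (by rw [hH']; simp only [map_add, map_sub, map_one, map_mul])
    simpa only [map_sub, map_one, map_mul, map_pow, map_ofNat] using this
  have eH2 : (xx - 1) * (H' - 1) = X * (xx * DF) * (xx * H' - B) := by
    apply mul_right_cancel₀ F_ne
    linear_combination eH' + (xx * H' - B) * hF
  obtain ⟨K', hK'⟩ : ∃ K', K' = B ^ 2 * C ^ 2 * (1 - (B - 1) * C) * Ei := ⟨_, rfl⟩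
  have evK' : ev K' = B ^ 3 := by
    rw [hK']; simp only [map_sub, map_one, map_mul, map_pow, evB, evC]
    linear_combination (B ^ 3) * evE
  have eK' : (xx - 1) * K' * F = (xx * F - (2 * B ^ 2 - B ^ 3)) * F
      + (F - 1) * (xx * K' - B ^ 3) := by
    apply φi
    have := field_K (φ X) (φ xx) (φ B) (φ C) ft (nz B_ne) (nz C_ne) fB fC (φ F) fF (φ Ei) fE
      (φ K') (by rw [hK']; simp only [map_sub, map_one, map_mul, map_pow])
    simpa only [map_sub, map_add, map_one, map_mul, map_pow, map_ofNat] using this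
  have eK2 : (xx - 1) * K' = (xx * F - (2 * B ^ 2 - B ^ 3)) + X * (xx * DF) * (xx * K' - B ^ 3) := by
    apply mul_right_cancel₀ F_ne
    linear_combination eK' + (xx * K' - B ^ 3) * hF
  have hHH : H = H' := by
    rw [← sub_eq_zero]
    apply uniq _ (xx * DF * xx) (- (xx * DF))
    rw [map_sub, evH']
    linear_combination (xx - 1) * hH + X * xx * DF * hDH - eH2
  have hKK : K = K' := by
    rw [← sub_eq_zero]
    apply uniq _ (xx * DF * xx) (- (xx * DF))
    rw [map_sub, evK']
    linear_combination (xx - 1) * hK + X * xx * DF * hDK + hDF - eK2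
  exact ⟨by rw [hHH, evH'], by rw [hKK, evK']⟩

end SDAlg

namespace SDFin

open PowerSeries SDAlg

lemma D_series (P D : ℕ → Polynomial ℚ)
    (h : ∀ n, (Polynomial.X - 1) * D n = Polynomial.X * P n - Polynomial.C ((P n).eval 1)) :
    (xx - 1) * (PowerSeries.mk D : A) = xx * PowerSeries.mk P - ev (PowerSeries.mk P) := by
  ext1 n
  rw [coeff_xx_sub, map_sub, xx, coeff_C_mul, ev, coeff_map, coeff_mk, coeff_mk, h n]
  simp

lemma rec_series (P E Q R : ℕ → Polynomial ℚ) (h0 : P 0 = E 0)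
    (h : ∀ n, P (n + 1) = E (n + 1) + ∑ ij ∈ Finset.HasAntidiagonal.antidiagonal n,
      Polynomial.X * Q ij.1 * R ij.2) :
    (PowerSeries.mk P : A) = PowerSeries.mk E +
      X * (xx * PowerSeries.mk Q * PowerSeries.mk R) := by
  ext1 n
  cases n with
  | zero => simp [h0]
  | succ n =>
    rw [map_add, coeff_succ_X_mul, mul_assoc, xx, coeff_C_mul, coeff_mul, coeff_mk, coeff_mk, h n,
      Finset.mul_sum]
    congr 1
    refine Finset.sum_congr rfl fun ij _ => ?_
    rw [coeff_mk, coeff_mk, mul_assoc]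

lemma mk_one : (PowerSeries.mk (fun n => if n = 0 then 1 else 0) : A) = 1 := by
  ext1 n
  rw [coeff_mk, coeff_one]

theorem counts (B : ℚ⟦X⟧) (hB : B = 1 + X * B ^ 4) (k : ℕ) :
    ((BT.sdS (2 * k)).card : ℚ) = coeff k B ∧
      ((BT.sdS (2 * k + 1)).card : ℚ) = coeff k (B ^ 3) := by
  have hF := rec_series BT.Fp (fun n => if n = 0 then 1 else 0) BT.DFp BT.Fp
    (by simp [BT.Fp_zero]) (fun n => by rw [BT.Fp_succ]; simp)
  have hH := rec_series (fun k => BT.Sp (2 * k)) (fun n => if n = 0 then 1 else 0) BT.DFp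
    (fun k => BT.DSp (2 * k))
    (by simp [BT.Sp_zero]) (fun n => by rw [BT.Sp_even]; simp)
  have hK := rec_series (fun k => BT.Sp (2 * k + 1)) BT.DFp BT.DFp
    (fun k => BT.DSp (2 * k + 1))
    (by simp [BT.Sp_one]) (fun n => by rw [BT.Sp_odd])
  rw [mk_one] at hF hH
  obtain ⟨h1, h2⟩ := solve B hB _ _ _ _ _ _ (D_series _ _ BT.DFp_eq)
    (D_series _ _ (fun k => BT.DSp_eq (2 * k)))
    (D_series _ _ (fun k => BT.DSp_eq (2 * k + 1))) hF hH hK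
  have e1 := congrArg (coeff k) h1
  have e2 := congrArg (coeff k) h2
  rw [ev, coeff_map, coeff_map, coeff_mk] at e1 e2
  constructor
  · rw [← BT.Sp_eval]; exact Polynomial.C_injective e1
  · rw [← BT.Sp_eval]; exact Polynomial.C_injective e2

end SDFin

theorem count_self_dual_intervals (k : ℕ) :
    (1 ≤ k →
      (3 * k + 1) * Set.ncard {p : BT × BT | BT.interval p (2 * k) ∧ BT.selfDual p} =
        Nat.choose (4 * k) k) ∧
    (k + 1) * Set.ncard {p : BT × BT | BT.interval p (2 * k + 1) ∧ BT.selfDual p} =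
      Nat.choose (4 * k + 2) k := by
  obtain ⟨B, hB⟩ := SDAlg.exists_B
  obtain ⟨h1, h2⟩ := SDFin.counts B hB k
  have r1 := SDAlg.raney B hB k 1
  have r3 := SDAlg.raney B hB k 3
  rw [pow_one, ← h1] at r1
  rw [← h2] at r3
  rw [BT.ncard_eq, BT.ncard_eq]
  have r1' : (4 * k + 1) * (BT.sdS (2 * k)).card = Nat.choose (4 * k + 1) k := by
    have : ((4 * k + 1 : ℕ) : ℚ) * (BT.sdS (2 * k)).card = Nat.choose (4 * k + 1) k := by
      push_cast at r1 ⊢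
      linarith
    exact_mod_cast this
  have r3' : (4 * k + 3) * (BT.sdS (2 * k + 1)).card = 3 * Nat.choose (4 * k + 3) k := by
    have : ((4 * k + 3 : ℕ) : ℚ) * (BT.sdS (2 * k + 1)).card
        = 3 * Nat.choose (4 * k + 3) k := by
      push_cast at r3 ⊢
      linarith
    exact_mod_cast this
  have c1 := Nat.choose_mul_succ_eq (4 * k) k
  have c3 := Nat.choose_mul_succ_eq (4 * k + 2) k
  rw [show 4 * k + 1 - k = 3 * k + 1 by omega, ← r1'] at c1
  rw [show 4 * k + 2 + 1 - k = 3 * k + 3 by omega, show 4 * k + 2 + 1 = 4 * k + 3 by rfl] at c3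
  constructor
  · intro _
    apply Nat.eq_of_mul_eq_mul_left (show 0 < 4 * k + 1 by omega)
    linarith
  · apply Nat.eq_of_mul_eq_mul_left (show 0 < 4 * k + 3 by omega)
    calc (4 * k + 3) * ((k + 1) * (BT.sdS (2 * k + 1)).card)
        = (k + 1) * ((4 * k + 3) * (BT.sdS (2 * k + 1)).card) := by ring
      _ = (4 * k + 3).choose k * (3 * k + 3) := by rw [r3']; ring
      _ = _ := by rw [← c3]; ring
end

section
/- For k ≥ 1, the number of self-dual modern Tamari intervals of size 2k equals (2^{k-1}/(k+1)) · C(2k, k), and for k ≥ 0 the number of self-dual modern Tamari intervals of size 2k+1 equals (2^k/(k+1)) · C(2k, k). -/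
namespace SDM

/-! ### Words and generating functions -/

/-- `N^c`. -/
abbrev Nn (c : ℕ) : List Bool := List.replicate c false

/-- descendants produced by a threshold at a letter with `a` letters before it -/
def bottom (κ a : ℕ) : List (List Bool) :=
  (true :: Nn (a + κ)) :: (List.range a).map (fun t => Nn (a - t + κ))

def extch : ℕ → List Bool → List (List Bool)
  | _, [] => []
  | a, b :: β => (if b then (bottom 0 a).map (· ++ true :: β) else []) ++ extch (a + 1) β

theorem extch_append (a : ℕ) (x y : List Bool) :
    extch a (x ++ y) = (extch a x).map (· ++ y) ++ extch (a + x.length) y := by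
  induction x generalizing a with
  | nil => simp [extch]
  | cons b x ih =>
    simp only [List.cons_append, extch, ih, List.map_append, List.length_cons, List.append_assoc]
    congr 1
    · split_ifs <;> simp
    · rw [show a + 1 + x.length = a + (x.length + 1) by ring]

theorem extch_Nn (a b : ℕ) : extch a (Nn b) = [] := by
  induction b generalizing a with
  | zero => rfl
  | succ b ih => simp [List.replicate_succ, extch, ih]

theorem alg1 {R : Type*} [CommRing R] (z s t u c : R) (ht : t = 2 * s - 1) (h1 : s - 1 = z * t ^ 2)
    (h2 : c - 1 = z * s * u * c ^ 2) :
    (u-1)*(s*(1-z*t)*c*((1-z*t)-z*s*c)-s*(z*t)*(z*s)*c^2)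
      = (s-1-s*c*(1-(1-z*t)*u))*((1-z*t)-z*s*c) := by
  grind
theorem alg2 {R : Type*} [CommRing R] (z s t u c q : R) (ht : t = 2 * s - 1) (h1 : s - 1 = z * t ^ 2)
    (h2 : c - 1 = z * s * u * c ^ 2) (hq : q = s-1-s*c*(1-(1-z*t)*u)) :
    (u-1)*q=((u-1)^2+z*u*q^2+z*u*(q-(u-1)*(3*s-1-s^2))) := by
  subst hq ht
  linear_combination s*(1-(1-z*(2*s-1))*u)^2*h2 + (u^2 - u - s*z*u^2)*h1
theorem alg3 {R : Type*} [CommRing R] (z s t u c q d : R) (ht : t = 2 * s - 1) (h1 : s - 1 = z * t ^ 2)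
    (hq : q = s-1-s*c*(1-(1-z*t)*u)) (hd : d = 1 - z*t*u-z*s*u^2*c) :
    (u-1)*u - z*u*(u*q*u+u*(u-t*d))=(u-1)*u*d := by
  subst hq hd ht
  linear_combination z*u^3*h1
theorem alg4 {R : Type*} [CommRing R] (z s t u c q d N: R) (ht : t = 2 * s - 1) (h1 : s - 1 = z * t ^ 2)
    (hq : q = s-1-s*c*(1-(1-z*t)*u)) (hd : d = 1 - z*t*u-z*s*u^2*c) (hN : N = s * u^2*c) :
    (u-1)*N - z*u*(u*q*N+u*(N-t^2*d))=u^2*q*d := by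
  subst hq hN ht
  linear_combination (-u^2*d+u^4*s*c*z)*h1 + (1-(1-z*(2*s-1))*u)*s*c*u^2*hd

open PowerSeries

abbrev PP := PowerSeries (Polynomial ℚ)

noncomputable section

def u : PP := PowerSeries.C Polynomial.X
def z : PP := PowerSeries.X

def ev : PP →+* PP :=
  (PowerSeries.map Polynomial.C).comp (PowerSeries.map (Polynomial.evalRingHom 1))

def Lc : ℕ → List Bool → Polynomial ℚ
  | 0, w => Polynomial.X ^ w.length
  | k + 1, w => ((extch 0 w).map (Lc k)).sum

def chw (κ : ℕ) (w : List Bool) : List (List Bool) := extch 0 w ++ bottom κ w.length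

def Gc (κ : ℕ) : ℕ → List Bool → Polynomial ℚ
  | 0, w => Polynomial.X ^ w.length
  | k + 1, w => ((chw κ w).map (Gc κ k)).sum

def LL (w : List Bool) : PP := PowerSeries.mk (fun k => Lc k w)
def GG (κ : ℕ) (w : List Bool) : PP := PowerSeries.mk (fun k => Gc κ k w)

theorem coeff_list_sum {α : Type*} (l : List α) (f : α → PP) (k : ℕ) :
    coeff k ((l.map f).sum) = (l.map (fun w => coeff k (f w))).sum := by
  induction l with
  | nil => simp
  | cons a l ih => simp [ih]

theorem LL_eq (w : List Bool) : LL w = u ^ w.length + z * ((extch 0 w).map LL).sum := by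
  ext1 k
  cases k with
  | zero => simp [LL, Lc, u, z, ← map_pow]
  | succ k =>
    simp only [z, map_add, coeff_succ_X_mul, coeff_list_sum]
    simp [LL, Lc, u, ← map_pow]

theorem GG_eq (κ : ℕ) (w : List Bool) :
    GG κ w = u ^ w.length + z * ((chw κ w).map (GG κ)).sum := by
  ext1 k
  cases k with
  | zero => simp [GG, Gc, u, z, ← map_pow]
  | succ k =>
    simp only [z, map_add, coeff_succ_X_mul, coeff_list_sum]
    simp [GG, Gc, u, ← map_pow]

theorem LL_Nn (b : ℕ) : LL (Nn b) = u ^ b := by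
  rw [LL_eq, extch_Nn]; simp

theorem Lc_app (k b : ℕ) (x : List Bool) :
    Lc k (x ++ true :: Nn b) = Polynomial.X ^ (b + 1) * Gc 0 k x := by
  induction k generalizing x with
  | zero => simp [Lc, Gc]; ring
  | succ k ih =>
    have h : extch 0 (x ++ true :: Nn b) = (chw 0 x).map (· ++ true :: Nn b) := by
      rw [extch_append, extch, extch_Nn]
      simp [chw]
    rw [Lc, Gc, h, List.map_map, ← List.sum_map_mul_left]
    congr 1
    apply List.map_congr_left
    intro y _
    exact ih y

theorem LL_app (b : ℕ) (x : List Bool) : LL (x ++ true :: Nn b) = u ^ (b + 1) * GG 0 x := by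
  ext1 k
  simp only [LL, GG, coeff_mk, Lc_app, u, ← map_pow, coeff_C_mul]

/-- the series A -/
def AA : PP := GG 0 []

def psi (κ : ℕ) (f : PP) : PP :=
  (u - 1) * f - z * u ^ κ * ((u - 1) * u * AA * f + u * (f - ev f))

theorem psi_add (κ : ℕ) (f g : PP) : psi κ (f + g) = psi κ f + psi κ g := by
  simp only [psi, map_add]; ring

theorem ev_u : ev u = 1 := by simp [ev, u]
theorem ev_z : ev z = z := by simp [ev, z]

theorem psi_z (κ : ℕ) (f : PP) : psi κ (z * f) = z * psi κ f := by
  simp only [psi, map_mul, ev_z]; ring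

theorem psi_sum {α : Type*} (κ : ℕ) (l : List α) (f : α → PP) :
    psi κ ((l.map f).sum) = (l.map (fun w => psi κ (f w))).sum := by
  induction l with
  | nil => simp [psi]
  | cons a l ih => simp [psi_add, ih]

theorem geom (a κ : ℕ) :
    (((List.range a).map (fun t => (u - 1) * u ^ (a - t + κ))).sum : PP)
      = u ^ κ * u * (u ^ a - 1) := by
  induction a with
  | zero => simp
  | succ a ih =>
    rw [List.range_succ_eq_map]
    simp only [List.map_cons, List.map_map, List.sum_cons]
    have : ((fun t => (u - 1) * u ^ (a + 1 - t + κ)) ∘ Nat.succ : ℕ → PP)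
        = (fun t => (u - 1) * u ^ (a - t + κ)) := by
      funext t; simp
    rw [this, ih]
    simp only [Nat.sub_zero]
    ring

theorem bottom_sum (κ a : ℕ) :
    ((bottom κ a).map (fun w => (u - 1) * LL w)).sum
      = u ^ κ * ((u - 1) * u * AA * u ^ a + u * (u ^ a - 1)) := by
  have h := LL_app (a + κ) []
  simp only [List.nil_append] at h
  simp only [bottom, List.map_cons, List.map_map, List.sum_cons, h]
  have : ((fun w => (u - 1) * LL w) ∘ fun t => Nn (a - t + κ))
      = (fun t => (u - 1) * u ^ (a - t + κ)) := by
    funext t; simp only [Function.comp, LL_Nn]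
  rw [this, geom]
  simp only [AA]
  ring

theorem psi_GG (κ : ℕ) (w : List Bool) : psi κ (GG κ w) = (u - 1) * LL w := by
  have key : ∀ w, psi κ (GG κ w) - (u - 1) * LL w
      = z * ((chw κ w).map (fun w' => psi κ (GG κ w') - (u - 1) * LL w')).sum := by
    intro w
    conv_lhs => rw [GG_eq, LL_eq, psi_add, psi_z, psi_sum]
    have h1 : ((chw κ w).map (fun w' => psi κ (GG κ w') - (u - 1) * LL w')).sum
        = ((chw κ w).map (fun w' => psi κ (GG κ w'))).sum
          - ((chw κ w).map (fun w' => (u - 1) * LL w')).sum := by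
      generalize chw κ w = l
      induction l with
      | nil => simp
      | cons a l ih => simp only [List.map_cons, List.sum_cons, ih]; ring
    rw [h1]
    have h2 : ((chw κ w).map (fun w' => (u - 1) * LL w')).sum
        = (u - 1) * ((extch 0 w).map LL).sum
          + u ^ κ * ((u - 1) * u * AA * u ^ w.length + u * (u ^ w.length - 1)) := by
      rw [chw, List.map_append, List.sum_append, bottom_sum, List.sum_map_mul_left]
    rw [h2]
    simp only [psi, map_pow, ev_u, one_pow]
    ring
  have main : ∀ k, ∀ w, coeff k (psi κ (GG κ w) - (u - 1) * LL w) = 0 := by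
    intro k
    induction k with
    | zero => intro w; rw [key]; simp [z]
    | succ k ih =>
      intro w
      rw [key, z, coeff_succ_X_mul, coeff_list_sum]
      simp only [ih]
      simp
  rw [← sub_eq_zero]
  ext1 k
  simpa using main k w

/-! ### Solving -/

theorem u_sub_one_ne : (u - 1 : PP) ≠ 0 := by
  intro h
  have := congrArg (coeff 0) h
  simp [u] at this
  have h2 := congrArg (Polynomial.eval 0) this
  simp at h2

theorem dvd_of_dvd_mul (m : ℕ) (f : PP) (h : z ^ m ∣ (u - 1) * f) : z ^ m ∣ f := by
  rw [z, X_pow_dvd_iff] at *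
  intro k hk
  have := h k hk
  have e : (u - 1 : PP) = PowerSeries.C (Polynomial.X - 1) := by simp [u]
  rw [e, coeff_C_mul] at this
  rcases mul_eq_zero.1 this with h | h
  · have h2 := congrArg (Polynomial.eval 0) h
    simp at h2
  · exact h

theorem eq_zero_of_dvd (f : PP) (h : ∀ m, z ^ m ∣ f) : f = 0 := by
  ext1 k
  have := h (k + 1)
  rw [z, X_pow_dvd_iff] at this
  simpa using this k (Nat.lt_succ_self k)

theorem uniq (M N δ : PP) (h : (u - 1) * δ = z * (M * δ + N * (δ - ev δ))) : δ = 0 := by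
  apply eq_zero_of_dvd
  intro m
  induction m with
  | zero => simp
  | succ m ih =>
    apply dvd_of_dvd_mul
    rw [h, pow_succ']
    apply mul_dvd_mul_left
    have h1 : z ^ m ∣ ev δ := by
      have := map_dvd ev ih
      rwa [map_pow, ev_z] at this
    exact dvd_add (ih.mul_left _) ((dvd_sub ih h1).mul_left _)

theorem exists_fix (r : PP) : ∃ c : PP, c = 1 + z * r * c ^ 2 := by
  let s : ℕ → PP := fun n => Nat.rec 0 (fun _ c => 1 + z * r * c ^ 2) n
  have hs : ∀ n, s (n + 1) = 1 + z * r * s n ^ 2 := fun n => rfl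
  have h1 : ∀ n, z ^ n ∣ s (n + 1) - s n := by
    intro n
    induction n with
    | zero => simp
    | succ n ih =>
      rw [hs (n + 1)]
      nth_rewrite 2 [hs n]
      rw [pow_succ']
      have : 1 + z * r * s (n + 1) ^ 2 - (1 + z * r * s n ^ 2)
          = z * ((s (n + 1) - s n) * (r * (s (n + 1) + s n))) := by ring
      rw [this]
      exact mul_dvd_mul_left _ (ih.mul_right _)
  have h2 : ∀ n j, z ^ n ∣ s (n + j) - s n := by
    intro n j
    induction j with
    | zero => simp
    | succ j ih =>
      have : s (n + (j + 1)) - s n = (s (n + j + 1) - s (n + j)) + (s (n + j) - s n) := by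
        rw [← add_assoc]; ring
      rw [this]
      exact dvd_add ((pow_dvd_pow _ (by omega)).trans (h1 (n + j))) ih
  let c : PP := PowerSeries.mk (fun n => coeff n (s (n + 1)))
  have h3 : ∀ n, z ^ n ∣ c - s n := by
    intro n
    rw [z, X_pow_dvd_iff]
    intro k hk
    have := h2 (k + 1) (n - (k + 1))
    rw [z, X_pow_dvd_iff] at this
    have := this k (by omega)
    rw [show k + 1 + (n - (k + 1)) = n by omega] at this
    rw [map_sub] at this ⊢
    simp only [c, coeff_mk]
    linear_combination -this
  refine ⟨c, ?_⟩
  rw [← sub_eq_zero]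
  apply eq_zero_of_dvd
  intro m
  have : c - (1 + z * r * c ^ 2)
      = (c - s (m + 1)) - (c - s m) * (z * r * (c + s m)) := by
    rw [hs]; ring
  rw [this]
  exact dvd_sub ((pow_dvd_pow _ (by omega)).trans (h3 (m + 1))) ((h3 m).mul_right _)

/-- Catalan-type series -/
def tq : PowerSeries ℚ := PowerSeries.mk (fun n => (2 : ℚ) ^ n * catalan n)

theorem tq_eq : tq = 1 + 2 * PowerSeries.X * tq ^ 2 := by
  ext1 k
  cases k with
  | zero => simp [tq, mul_assoc, mul_comm (2 : PowerSeries ℚ)]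
  | succ k =>
    rw [mul_comm (2 : PowerSeries ℚ), mul_assoc, map_add, coeff_succ_X_mul, pow_two,
      show (2 : PowerSeries ℚ) = PowerSeries.C (2 : ℚ) from (map_ofNat _ 2).symm, coeff_C_mul, coeff_mul]
    simp only [tq, coeff_mk, catalan_succ']
    push_cast
    rw [Finset.mul_sum, Finset.mul_sum, coeff_one, if_neg (by omega), zero_add]
    apply Finset.sum_congr rfl
    rintro ⟨i, j⟩ hij
    have hij : i + j = k := Finset.HasAntidiagonal.mem_antidiagonal.1 hij
    subst hij
    ring

def tt : PP := PowerSeries.map Polynomial.C tq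

theorem tt_eq : tt = 1 + 2 * z * tt ^ 2 := by
  have := congrArg (PowerSeries.map (Polynomial.C (R := ℚ))) tq_eq
  rw [map_add, map_mul, map_mul, map_pow, map_one, map_ofNat, PowerSeries.map_X] at this
  exact this

theorem ev_tt : ev tt = tt := by
  simp only [ev, tt, RingHom.comp_apply]
  congr 1
  ext1 k
  simp

theorem ev_ev (f : PP) : ev (ev f) = ev f := by
  simp only [ev, RingHom.comp_apply]
  congr 1
  ext1 k
  simp

theorem exists_inv (f : PP) : ∃ I : PP, (1 - z * f) * I = 1 := by
  have : IsUnit (1 - z * f) := by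
    rw [PowerSeries.isUnit_iff_constantCoeff]
    simp [z]
  obtain ⟨v, hv⟩ := this
  exact ⟨↑v⁻¹, by rw [← hv]; simp⟩

theorem z_ne : (z : PP) ≠ 0 := PowerSeries.X_ne_zero

theorem solve : ev (GG 1 [false]) = tt ∧ ev (GG 1 [true, false]) = tt ^ 2 := by
  obtain ⟨t, ht⟩ : ∃ t, t = tt := ⟨_, rfl⟩
  have htt : t = 1 + 2 * z * t ^ 2 := by rw [ht]; exact tt_eq
  have hevt : ev t = t := by rw [ht]; exact ev_tt
  rw [← ht]
  obtain ⟨s, hs⟩ : ∃ s, s = 1 + z * t ^ 2 := ⟨_, rfl⟩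
  have hevs : ev s = s := by rw [hs]; simp [hevt, ev_z]
  have hts : t = 2 * s - 1 := by rw [hs]; linear_combination htt
  have h1 : s - 1 = z * t ^ 2 := by rw [hs]; ring
  obtain ⟨c, hc⟩ := exists_fix (s * u)
  have h2 : c - 1 = z * s * u * c ^ 2 := by linear_combination hc
  obtain ⟨I, hI⟩ := exists_inv (t + s * c)
  obtain ⟨q, hq⟩ : ∃ q, q = s-1-s*c*(1-(1-z*t)*u) := ⟨_, rfl⟩
  obtain ⟨A, hA⟩ : ∃ A, A = s*(1-z*t)*c-s*(z*t)*(z*s)*c^2*I := ⟨_, rfl⟩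
  have hAq : (u - 1) * A = q := by
    have := alg1 z s t u c hts h1 h2
    rw [hA, hq]
    linear_combination I * this +
      (-(u-1)*(s*(1-z*t)*c) + (s-1-s*c*(1-(1-z*t)*u))) * hI
  have fe : (u - 1) * A = (u - 1) + z * u * (u - 1) * A ^ 2 + z * u * (A - (3*s-1-s^2)) := by
    apply mul_left_cancel₀ u_sub_one_ne
    have := alg2 z s t u c q hts h1 h2 hq
    rw [← hAq] at this
    linear_combination this
  have hevA : ev A = 3*s-1-s^2 := by
    have := congrArg ev fe
    simp only [map_mul, map_add, map_sub, map_pow, ev_u, ev_z, map_one, hevs, map_ofNat] at this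
    apply mul_left_cancel₀ z_ne
    linear_combination -this
  have hAA : AA = A := by
    have h := psi_GG 0 []
    rw [show LL [] = 1 from LL_Nn 0, show GG 0 [] = AA from rfl, psi] at h
    rw [← sub_eq_zero]
    apply uniq (u * (u - 1) * (AA + A)) u
    rw [map_sub, hevA]
    linear_combination h - fe
  obtain ⟨J, hJ⟩ := exists_inv (t * u + s * u ^ 2 * c)
  obtain ⟨d, hd⟩ : ∃ d, d = 1 - z*t*u-z*s*u^2*c := ⟨_, rfl⟩
  have hJ' : d * J = 1 := by rw [hd]; linear_combination hJ
  have L1 : LL [false] = u := by simpa using LL_Nn 1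
  have L2 : LL [true, false] = u ^ 2 * A := by
    have := LL_app 1 []
    rw [← hAA]; exact this
  constructor
  · have e3 := alg3 z s t u c q d hts h1 hq hd
    have fe3 : (u - 1) * (u * J) - z * u * ((u - 1) * u * A * (u * J) + u * (u * J - t))
        = (u - 1) * u := by
      rw [← hAq] at e3
      linear_combination J * e3 + ((u - 1) * u - z * u * u * t) * hJ'
    have hev : ev (u * J) = t := by
      have := congrArg ev fe3
      simp only [map_mul, map_sub, map_add, ev_u, ev_z, map_one, hevt] at this
      apply mul_left_cancel₀ z_ne
      simp only [map_mul, ev_u]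
      linear_combination -this
    have h := psi_GG 1 [false]
    rw [L1, psi, hAA] at h
    have : GG 1 [false] = u * J := by
      rw [← sub_eq_zero]
      apply uniq (u * (u - 1) * u * A) (u * u)
      rw [map_sub, hev]
      linear_combination h - fe3
    rw [this, hev]
  · obtain ⟨N, hN⟩ : ∃ N, N = s * u ^ 2 * c := ⟨_, rfl⟩
    have e4 := alg4 z s t u c q d N hts h1 hq hd hN
    have fe4 : (u - 1) * (N * J) - z * u * ((u - 1) * u * A * (N * J) + u * (N * J - t ^ 2))
        = (u - 1) * (u ^ 2 * A) := by
      rw [← hAq] at e4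
      linear_combination J * e4 + (u ^ 2 * (u - 1) * A - z * u * u * t ^ 2) * hJ'
    have hev : ev (N * J) = t ^ 2 := by
      have := congrArg ev fe4
      simp only [map_mul, map_sub, map_add, map_pow, ev_u, ev_z, map_one, hevt] at this
      apply mul_left_cancel₀ z_ne
      simp only [map_mul]
      linear_combination -this
    have h := psi_GG 1 [true, false]
    rw [L2, psi, hAA] at h
    have : GG 1 [true, false] = N * J := by
      rw [← sub_eq_zero]
      apply uniq (u * (u - 1) * u * A) (u * u)
      rw [map_sub, hev]
      linear_combination h - fe4
    rw [this, hev]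

/-- number of paths -/
def pc : ℕ → List Bool → ℕ
  | 0, _ => 1
  | k + 1, w => ((chw 1 w).map (pc k)).sum

theorem eval_Gc (k : ℕ) (w : List Bool) : (Gc 1 k w).eval 1 = pc k w := by
  induction k generalizing w with
  | zero => simp [Gc, pc]
  | succ k ih =>
    rw [Gc, pc]
    generalize chw 1 w = l
    induction l with
    | nil => simp
    | cons a l ih2 => simp [ih, ih2]

theorem coeff_ev (f : PP) (k : ℕ) : coeff k (ev f) = Polynomial.C ((coeff k f).eval 1) := by
  simp [ev]

theorem pc_odd (k : ℕ) : pc k [false] = 2 ^ k * catalan k := by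
  have h := congrArg (coeff k) solve.1
  rw [coeff_ev, tt, PowerSeries.coeff_map] at h
  have h := Polynomial.C_injective h
  simp only [GG, coeff_mk, eval_Gc, tq] at h
  exact_mod_cast h

theorem pc_even (k : ℕ) : pc k [true, false] = 2 ^ k * catalan (k + 1) := by
  have h := congrArg (coeff k) solve.2
  rw [coeff_ev, tt, ← map_pow, PowerSeries.coeff_map] at h
  have h := Polynomial.C_injective h
  have h2 := congrArg (coeff (k + 1)) tq_eq
  rw [mul_comm (2 : PowerSeries ℚ), mul_assoc, map_add, coeff_succ_X_mul,
      show (2 : PowerSeries ℚ) = PowerSeries.C (2 : ℚ) from (map_ofNat _ 2).symm, coeff_C_mul,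
      coeff_one, if_neg (by omega), zero_add, ← h] at h2
  simp only [GG, coeff_mk, eval_Gc, tq] at h2
  have : (pc k [true, false] : ℚ) = 2 ^ k * catalan (k + 1) := by
    rw [pow_succ] at h2
    linarith
  exact_mod_cast this

end

end SDM
namespace SDM

open BT

/-! ### The bracket vector and the Tamari order -/

/-- size of the right subtree of the node with infix index `i` -/
def br : BT → ℕ → ℕ
  | leaf, _ => 0
  | node l r, i =>
    if i < l.size then br l i else if i = l.size then r.size else br r (i - l.size - 1)

/-- size of the left subtree of the node with infix index `i` -/
def lf : BT → ℕ → ℕ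
  | leaf, _ => 0
  | node l r, i =>
    if i < l.size then lf l i else if i = l.size then l.size else lf r (i - l.size - 1)

theorem br_l {l r : BT} {i : ℕ} (h : i < l.size) : br (node l r) i = br l i := by
  rw [br, if_pos h]

theorem br_m {l r : BT} {i : ℕ} (h : i = l.size) : br (node l r) i = r.size := by
  rw [br, if_neg (by omega), if_pos h]

theorem br_r {l r : BT} {i : ℕ} (h : l.size < i) :
    br (node l r) i = br r (i - l.size - 1) := by
  rw [br, if_neg (by omega), if_neg (by omega)]

theorem br_ge (T : BT) (i : ℕ) (h : T.size ≤ i) : br T i = 0 := by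
  induction T generalizing i with
  | leaf => rfl
  | node l r ihl ihr =>
    simp only [size] at h
    rw [br, if_neg (by omega), if_neg (by omega)]
    exact ihr _ (by omega)

theorem br_lt (T : BT) (i : ℕ) (h : i < T.size) : i + br T i < T.size := by
  induction T generalizing i with
  | leaf => simp [size] at h
  | node l r ihl ihr =>
    simp only [size] at h ⊢
    rw [br]
    split_ifs with h1 h2
    · have := ihl _ h1; omega
    · omega
    · have := ihr (i - l.size - 1) (by omega); omega

theorem Rot_size {T T' : BT} (h : Rot T T') : T.size = T'.size := by
  induction h with
  | rotate A B C => simp only [size]; omega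
  | left r _ ih => simp only [size]; omega
  | right l _ ih => simp only [size]; omega

theorem Rot_br {T T' : BT} (h : Rot T T') (i : ℕ) : br T i ≤ br T' i := by
  induction h generalizing i with
  | rotate A B C =>
    have e : (node A B).size = A.size + B.size + 1 := rfl
    rcases lt_trichotomy i A.size with h | h | h
    · rw [br_l (by omega), br_l h, br_l h]
    · rw [br_l (by omega), br_m h, br_m h]; simp only [size]; omega
    · rw [br_r (l := A) (r := node B C) h]
      rcases lt_trichotomy i (A.size + B.size + 1) with h' | h' | h'
      · rw [br_l (by omega), br_r h, br_l (by omega)]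
      · rw [br_m (by omega), br_m (by omega)]
      · rw [br_r (by omega), br_r (by omega)]
        apply le_of_eq; congr 1; omega
  | left r h ih =>
    simp only [br, Rot_size h]
    split_ifs
    · exact ih i
    · exact le_rfl
    · exact le_rfl
  | right l h ih =>
    simp only [br, Rot_size h]
    split_ifs
    · exact le_rfl
    · exact le_rfl
    · exact ih _

theorem tle_size {T T' : BT} (h : tle T T') : T.size = T'.size := by
  induction h with
  | refl => rfl
  | tail _ h ih => rw [ih, Rot_size h]

theorem tle_br {T T' : BT} (h : tle T T') (i : ℕ) : br T i ≤ br T' i := by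
  induction h with
  | refl => rfl
  | tail _ h ih => exact ih.trans (Rot_br h i)

theorem tle_left {l l' : BT} (r : BT) (h : tle l l') : tle (node l r) (node l' r) := by
  induction h with
  | refl => exact Relation.ReflTransGen.refl
  | tail _ h ih => exact ih.tail (Rot.left r h)

theorem tle_right (l : BT) {r r' : BT} (h : tle r r') : tle (node l r) (node l r') := by
  induction h with
  | refl => exact Relation.ReflTransGen.refl
  | tail _ h ih => exact ih.tail (Rot.right l h)

theorem split_at (T : BT) (p : ℕ) (hp : p < T.size) (h : ∀ i < p, i + br T i < p) :
    ∃ l r, l.size = p ∧ tle T (node l r) ∧ (∀ i < p, br l i = br T i) ∧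
      (∀ i, p < i → i < T.size → br r (i - p - 1) = br T i) := by
  induction T with
  | leaf => simp [size] at hp
  | node a b iha ihb =>
    rcases lt_trichotomy a.size p with h1 | h1 | h1
    · have := h _ h1
      simp only [br, lt_irrefl, if_false, if_true] at this
      simp only [size] at hp
      omega
    · refine ⟨a, b, h1, Relation.ReflTransGen.refl, ?_, ?_⟩
      · intro i hi
        rw [br, if_pos (by omega)]
      · intro i hi _
        rw [br, if_neg (by omega), if_neg (by omega), h1]
    · obtain ⟨l, r, e1, e2, e3, e4⟩ := iha h1 (by
        intro i hi
        have := h i hi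
        rwa [br, if_pos (by omega)] at this)
      have hs := tle_size e2
      simp only [size] at hs
      refine ⟨l, node r b, e1, (tle_left b e2).tail (Rot.rotate _ _ _), ?_, ?_⟩
      · intro i hi
        rw [br, if_pos (by omega), e3 i hi]
      · intro i hi hi2
        rw [br, br]
        rcases lt_trichotomy i a.size with h' | h' | h'
        · rw [if_pos (by omega), if_pos h', e4 i hi h']
        · rw [if_neg (by omega), if_pos (by omega), if_neg (by omega), if_pos h']
        · rw [if_neg (by omega), if_neg (by omega), if_neg (by omega), if_neg (by omega)]
          congr 1; omega

theorem tle_of_br (T' : BT) (T : BT) (hs : T.size = T'.size)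
    (h : ∀ i < T.size, br T i ≤ br T' i) : tle T T' := by
  induction T' generalizing T with
  | leaf =>
    cases T with
    | leaf => exact Relation.ReflTransGen.refl
    | node a b => simp [size] at hs
  | node l' r' ihl ihr =>
    simp only [size] at hs
    obtain ⟨l, r, e1, e2, e3, e4⟩ := split_at T l'.size (by omega) (by
      intro i hi
      have h1 := h i (by omega)
      rw [br, if_pos hi] at h1
      have := br_lt l' i hi
      omega)
    have hs2 := tle_size e2
    simp only [size] at hs2
    refine Relation.ReflTransGen.trans e2 (Relation.ReflTransGen.trans
      (tle_left r (ihl l e1 ?_)) (tle_right l' (ihr r (by omega) ?_)))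
    · intro i hi
      rw [e3 i (by omega)]
      have := h i (by omega)
      rwa [br, if_pos (by omega)] at this
    · intro i hi
      have h4 := e4 (i + l'.size + 1) (by omega) (by omega)
      have h5 := h (i + l'.size + 1) (by omega)
      rw [br, if_neg (by omega), if_neg (by omega)] at h5
      rw [show i + l'.size + 1 - l'.size - 1 = i by omega] at h4 h5
      omega

theorem tle_iff {T T' : BT} (hs : T.size = T'.size) :
    tle T T' ↔ ∀ i < T.size, br T i ≤ br T' i :=
  ⟨fun h i _ => tle_br h i, tle_of_br T' T hs⟩

theorem size_mir (T : BT) : (mir T).size = T.size := by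
  induction T with
  | leaf => rfl
  | node l r ihl ihr => simp only [mir, size]; omega

theorem mir_mir (T : BT) : mir (mir T) = T := by
  induction T with
  | leaf => rfl
  | node l r ihl ihr => simp only [mir, ihl, ihr]

theorem lf_mir (T : BT) (i : ℕ) (h : i < T.size) : lf (mir T) i = br T (T.size - 1 - i) := by
  induction T generalizing i with
  | leaf => simp [size] at h
  | node l r ihl ihr =>
    simp only [size] at h
    have e : (node l r).size = l.size + r.size + 1 := rfl
    have er := size_mir r
    rw [mir, lf]
    rcases lt_trichotomy i r.size with h' | h' | h'
    · rw [if_pos (by omega), br_r (by omega), ihr i h']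
      congr 1; omega
    · rw [if_neg (by omega), if_pos (by omega), br_m (by omega), er]
    · rw [if_neg (by omega), if_neg (by omega), br_l (by omega), ihl _ (by omega)]
      congr 1; omega

theorem lf_next (T : BT) (i : ℕ) (h : i + br T i + 1 < T.size) :
    i + br T i + 1 ≤ i + lf T (i + br T i + 1) := by
  induction T generalizing i with
  | leaf => simp [size] at h
  | node l r ihl ihr =>
    rcases lt_trichotomy i l.size with h' | h' | h'
    · have e : br (node l r) i = br l i := by rw [br, if_pos h']
      rw [e] at h ⊢
      have := br_lt l i h'
      rw [lf]
      split_ifs with h1 h2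
      · exact ihl i h1
      · omega
      · omega
    · have e : br (node l r) i = r.size := by rw [br, if_neg (by omega), if_pos h']
      rw [e] at h
      simp only [size] at h
      omega
    · have e : br (node l r) i = br r (i - l.size - 1) := by
        rw [br, if_neg (by omega), if_neg (by omega)]
      rw [e] at h ⊢
      simp only [size] at h
      rw [lf, if_neg (by omega), if_neg (by omega)]
      have := ihr (i - l.size - 1) (by omega)
      rw [show i + br r (i - l.size - 1) + 1 - l.size - 1
        = i - l.size - 1 + br r (i - l.size - 1) + 1 by omega]
      omega

theorem lf_inside (T : BT) (i j : ℕ) (h : i < j) (h2 : j ≤ i + br T i) :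
    i + lf T j < j := by
  induction T generalizing i j with
  | leaf => simp only [br] at h2; omega
  | node l r ihl ihr =>
    rcases lt_trichotomy i l.size with h' | h' | h'
    · rw [br, if_pos h'] at h2
      have := br_lt l i h'
      rw [lf, if_pos (by omega)]
      exact ihl i j h h2
    · rw [br, if_neg (by omega), if_pos h'] at h2
      rw [lf, if_neg (by omega), if_neg (by omega)]
      have : ∀ (T : BT) k, lf T k ≤ k := by
        intro T
        induction T with
        | leaf => intro k; simp [lf]
        | node l r ihl ihr =>
          intro k
          rw [lf]
          split_ifs
          · exact ihl k
          · omega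
          · exact (ihr _).trans (by omega)
      have := this r (j - l.size - 1)
      omega
    · rw [br, if_neg (by omega), if_neg (by omega)] at h2
      rw [lf, if_neg (by omega), if_neg (by omega)]
      have := ihr (i - l.size - 1) (j - l.size - 1) (by omega) (by omega)
      omega

/-- No two positions `i < j` with `j` a right descendant of `i` and symmetrically. -/
def V0 (b : ℕ → ℕ) (n : ℕ) : Prop :=
  ∀ i j, i < j → j < n → j ≤ i + b i → ¬ (n - 1 - i ≤ n - 1 - j + b (n - 1 - j))

theorem tle_mir_iff (T : BT) : tle T (mir T) ↔ V0 (br T) T.size := by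
  rw [tle_iff (size_mir T).symm]
  constructor
  · intro h i j hij hj hb hc
    have h1 := lf_inside (mir T) i j hij (by have := h i (by omega); omega)
    rw [lf_mir T j hj] at h1
    omega
  · intro h i hi
    by_contra hc
    have hlt := br_lt T i hi
    have h1 := lf_next (mir T) i (by rw [size_mir]; omega)
    rw [lf_mir T _ (by omega)] at h1
    exact h i (i + br (mir T) i + 1) (by omega) (by omega) (by omega) (by omega)

/-- Validity of a bracket vector. -/
def V (b : ℕ → ℕ) (n : ℕ) : Prop :=
  V0 b n ∧ ∀ i j, 0 < i → i < j → j < n → j ≤ i + b i → ¬ (n - i ≤ n - j + b (n - j))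

theorem tle_rise_iff (T : BT) : tle (node T leaf) (node leaf (mir T)) ↔
    ∀ i j, 0 < i → i < j → j < T.size → j ≤ i + br T i →
      ¬ (T.size - i ≤ T.size - j + br T (T.size - j)) := by
  have := tle_mir_iff (node T leaf)
  simp only [mir] at this
  rw [this]
  have hb : ∀ i, br (node T leaf) i = br T i := by
    intro i
    rw [br]
    split_ifs with h1 h2
    · rfl
    · rw [br_ge T i (by omega)]; rfl
    · rw [br_ge T i (by omega)]; rfl
  simp only [V0, hb, size]
  constructor
  · intro h i j h0 hij hj h1
    have := h i j hij (by omega) h1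
    simpa using this
  · intro h i j hij hj h1
    have h2 := br_lt T i (by omega)
    by_cases h0 : 0 < i
    · simpa using h i j h0 hij (by omega) h1
    · have h3 := br_lt T (T.size + 1 - 1 - j) (by omega)
      simp only [Nat.add_zero] at *
      omega

theorem valid_iff (T : BT) :
    (tle T (mir T) ∧ tle (node T leaf) (node leaf (mir T))) ↔ V (br T) T.size := by
  rw [tle_mir_iff, tle_rise_iff, V]

theorem set_eq (n : ℕ) :
    {p : BT × BT | interval p n ∧ modern p ∧ selfDual p} =
      Set.image (fun T => (T, mir T)) {T : BT | T.size = n ∧ V (br T) n} := by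
  ext ⟨T, T'⟩
  simp only [Set.mem_ofPred_eq, Set.mem_image, interval, modern, selfDual, Prod.mk.injEq]
  constructor
  · rintro ⟨⟨rfl, h2, h3⟩, h4, h5, rfl⟩
    exact ⟨T, ⟨rfl, (valid_iff T).1 ⟨h3, h4⟩⟩, rfl, rfl⟩
  · rintro ⟨U, ⟨rfl, h2⟩, rfl, rfl⟩
    have := (valid_iff U).2 h2
    exact ⟨⟨rfl, size_mir U, this.1⟩, this.2, mir_mir U, rfl⟩

theorem ncard_eq (n : ℕ) :
    Set.ncard {p : BT × BT | interval p n ∧ modern p ∧ selfDual p} =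
      Set.ncard {T : BT | T.size = n ∧ V (br T) n} := by
  rw [set_eq]
  apply Set.ncard_image_of_injective
  intro a b h
  exact (Prod.mk.injEq _ _ _ _ ▸ h).1

end SDM
namespace SDM

open BT

/-! ### Validity under insertion of a first and a last node -/

theorem V_step (b b' : ℕ → ℕ) (n x y : ℕ) (hn : 1 ≤ n) (hb : ∀ i < n, i + b i < n)
    (hx : x ≤ n + 1) (hy : y ≤ n)
    (hch : y < n → n - y - 1 + b (n - y - 1) + 1 = n) (h0 : b' 0 = x)
    (h1 : ∀ i, b' (i + 1) = b i + if i + b i + 1 = n ∧ i + y < n then 1 else 0) :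
    V b' (n + 2) ↔ V b n ∧ x ≤ n ∧ (y = n ∨ (x ≤ y ∧ (y = 0 → 2 ≤ n ∧ b 0 = 0))) := by
  have hA : ∀ i, b i ≤ b' (i + 1) := fun i => by rw [h1]; omega
  have hC : ∀ i, b' (i + 1) = b i ∨ (b' (i + 1) = b i + 1 ∧ i + b i + 1 = n ∧ i + y < n) := by
    intro i
    rw [h1]
    split_ifs with h
    · right; exact ⟨rfl, h⟩
    · left; rfl
  have hD : ∀ i, i + b i + 1 = n → i + y < n → b' (i + 1) = b i + 1 := by
    intro i e1 e2
    rw [h1, if_pos ⟨e1, e2⟩]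
  constructor
  · rintro ⟨v0, v1⟩
    refine ⟨⟨?_, ?_⟩, ?_, ?_⟩
    · intro i j hij hj e1 e2
      have a1 := hA i
      have a2 := hA (n - 1 - j)
      refine v0 (i + 1) (j + 1) (by omega) (by omega) (by omega) ?_
      rw [show n + 2 - 1 - (j + 1) = n - 1 - j + 1 by omega]
      omega
    · intro i j hi hij hj e1 e2
      have a1 := hA i
      have a2 := hA (n - j)
      refine v1 (i + 1) (j + 1) (by omega) (by omega) (by omega) (by omega) ?_
      rw [show n + 2 - (j + 1) = n - j + 1 by omega]
      omega
    · by_contra hc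
      refine v0 0 (n + 1) (by omega) (by omega) (by omega) ?_
      rw [show n + 2 - 1 - (n + 1) = 0 by omega]
      omega
    · by_cases hyn : y = n
      · exact Or.inl hyn
      right
      have hlt : y < n := by omega
      constructor
      · by_contra hc
        refine v0 0 (y + 1) (by omega) (by omega) (by omega) ?_
        have a1 := hch hlt
        have a2 := hD _ a1 (by omega)
        rw [show n + 2 - 1 - (y + 1) = n - y - 1 + 1 by omega]
        omega
      · intro y0
        have a1 := hch hlt
        have a2 := hD _ a1 (by omega)
        subst y0
        have a3 : b 0 = 0 ∨ 1 ≤ b 0 := by omega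
        by_cases n1 : n = 1
        · subst n1
          exfalso
          simp only [Nat.sub_self, Nat.sub_zero, Nat.zero_add] at a1 a2
          refine v1 1 2 (by omega) (by omega) (by omega) (by omega) ?_
          simp only [Nat.reduceAdd, Nat.reduceSub]
          omega
        · refine ⟨by omega, ?_⟩
          by_contra hc
          have a4 := hA 0
          rw [show n - 0 - 1 + 1 = n by omega] at a2
          refine v1 n (n + 1) (by omega) (by omega) (by omega) (by omega) ?_
          rw [show n + 2 - (n + 1) = 0 + 1 by omega]
          omega
  · rintro ⟨⟨v0, v1⟩, hxn, hor⟩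
    have key : ∀ m, 0 < m → m < n → m + b m + 1 = n → m + y < n → n - m ≤ b 0 → False := by
      intro m m0 mn e1 e2 e3
      rcases hor with rfl | ⟨h2, h3⟩
      · omega
      · by_cases hm : m = n - 1
        · have := h3 (by omega)
          omega
        · refine v0 0 (n - m - 1) (by omega) (by omega) (by omega) ?_
          rw [show n - 1 - (n - m - 1) = m by omega]
          omega
    constructor
    · intro i j hij hj e1 e2
      rcases Nat.eq_zero_or_pos i with rfl | hi
      · rw [show n + 2 - 1 - j = n - j + 1 by omega] at e2
        have := hb (n - j) (by omega)
        rcases hC (n - j) with h | h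
        · omega
        · omega
      · obtain ⟨i, rfl⟩ : ∃ i', i = i' + 1 := ⟨i - 1, by omega⟩
        obtain ⟨j, rfl⟩ : ∃ j', j = j' + 1 := ⟨j - 1, by omega⟩
        have bi := hb i (by omega)
        by_cases hjn : j = n
        · subst hjn
          rw [show j + 2 - 1 - (j + 1) = 0 by omega] at e2
          rcases hC i with h | h
          · omega
          · omega
        · rw [show n + 2 - 1 - (j + 1) = n - 1 - j + 1 by omega] at e2
          apply v0 i j (by omega) (by omega)
          · rcases hC i with h | h <;> omega
          · rcases hC (n - 1 - j) with h | h <;> omega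
    · intro i j hi hij hj e1 e2
      obtain ⟨i, rfl⟩ : ∃ i', i = i' + 1 := ⟨i - 1, by omega⟩
      obtain ⟨j, rfl⟩ : ∃ j', j = j' + 1 := ⟨j - 1, by omega⟩
      have bi := hb i (by omega)
      have b0 := hb 0 (by omega)
      rw [show n + 2 - (j + 1) = n - j + 1 by omega] at e2
      have noc : b 0 + 1 = n → y < n → False := by
        intro e3 e4
        by_cases n1 : n = 1
        · rcases hor with h | ⟨_, h⟩
          · omega
          · have := h (by omega); omega
        · refine v0 0 (n - 1) (by omega) (by omega) (by omega) ?_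
          rw [show n - 1 - (n - 1) = 0 by omega]
          omega
      by_cases hjn : j = n
      · subst hjn
        rw [show j - j = 0 by omega] at e2
        have hi' : i + b i + 1 = j ∧ i + y < j := by
          rcases hC i with h | h <;> omega
        rcases hC 0 with h | h
        · by_cases i0 : i = 0
          · omega
          · exact key i (by omega) (by omega) hi'.1 hi'.2 (by omega)
        · exact noc (by omega) (by omega)
      · have e1' : j ≤ i + b i := by rcases hC i with h | h <;> omega
        by_cases i0 : i = 0
        · subst i0
          have bj := hb (n - j) (by omega)
          rcases hC (n - j) with h | h
          · omega
          · exact key (n - j) (by omega) (by omega) h.2.1 h.2.2 (by omega)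
        · refine v1 i j (by omega) (by omega) (by omega) e1' ?_
          rcases hC (n - j) with h | h <;> omega

end SDM
namespace SDM

open BT

/-! ### Insertions in trees -/

/-- sizes of the proper subtrees along the left spine, increasing -/
def lsp : BT → List ℕ
  | leaf => []
  | node l _ => lsp l ++ [l.size]

/-- insert a new first node above the left-spine subtree of size `x` -/
def insL (x : ℕ) : BT → BT
  | leaf => node leaf leaf
  | node l r => if (node l r).size = x then node leaf (node l r) else node (insL x l) r

/-- delete the first node -/
def delL : BT → BT
  | leaf => leaf
  | node leaf r => r
  | node (node a b) r => node (delL (node a b)) r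

/-- size of the right subtree of the first node -/
def xL : BT → ℕ
  | leaf => 0
  | node leaf r => r.size
  | node (node a b) _ => xL (node a b)

def rsp (T : BT) : List ℕ := lsp (mir T)
def insR (y : ℕ) (T : BT) : BT := mir (insL y (mir T))
def delR (T : BT) : BT := mir (delL (mir T))
def yR (T : BT) : ℕ := xL (mir T)

def OKL (x : ℕ) (T : BT) : Prop := x ∈ lsp T ∨ x = T.size
def OKR (y : ℕ) (T : BT) : Prop := y ∈ rsp T ∨ y = T.size

theorem lsp_lt (T : BT) (s : ℕ) (h : s ∈ lsp T) : s < T.size := by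
  induction T with
  | leaf => simp [lsp] at h
  | node l r ihl ihr =>
    simp only [lsp, List.mem_append, List.mem_singleton] at h
    simp only [size]
    rcases h with h | h
    · have := ihl h; omega
    · omega

theorem rsp_lt (T : BT) (s : ℕ) (h : s ∈ rsp T) : s < T.size := by
  have := lsp_lt _ s h
  rwa [size_mir] at this

theorem lsp_sorted (T : BT) : (lsp T).Pairwise (· < ·) := by
  induction T with
  | leaf => simp [lsp]
  | node l r ihl ihr =>
    rw [lsp, List.pairwise_append]
    refine ⟨ihl, by simp, ?_⟩
    intro a ha b hb
    rw [List.mem_singleton] at hb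
    rw [hb]
    exact lsp_lt l a ha

theorem lsp_head (T : BT) (h : T.size ≠ 0) : ∃ t, lsp T = 0 :: t := by
  induction T with
  | leaf => simp [size] at h
  | node l r ihl ihr =>
    cases l with
    | leaf => exact ⟨[], rfl⟩
    | node a b =>
      obtain ⟨t, ht⟩ := ihl (by simp [size])
      exact ⟨t ++ [(node a b).size], by rw [lsp, ht]; rfl⟩

theorem OKL_node {x : ℕ} {l r : BT} (h : OKL x (node l r)) (hx : (node l r).size ≠ x) :
    OKL x l := by
  rcases h with h | h
  · simpa [lsp, OKL] using h
  · exact absurd h.symm hx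

theorem size_insL (x : ℕ) (T : BT) : (insL x T).size = T.size + 1 := by
  induction T with
  | leaf => rfl
  | node l r ihl ihr =>
    rw [insL]
    split_ifs with h
    · simp only [size]; omega
    · simp only [size, ihl]; omega

theorem br_insL (x : ℕ) (T : BT) (h : OKL x T) :
    br (insL x T) 0 = x ∧ ∀ i, br (insL x T) (i + 1) = br T i := by
  induction T with
  | leaf =>
    have : x = 0 := by simpa [OKL, lsp, size] using h
    subst this
    simp [insL, br, size]
  | node l r ihl ihr =>
    rw [insL]
    split_ifs with hx
    · refine ⟨by rw [br_m (by rfl), hx], ?_⟩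
      intro i
      rw [br_r (by simp [size])]
      simp [size]
    · obtain ⟨e1, e2⟩ := ihl (OKL_node h hx)
      have hs := size_insL x l
      refine ⟨by rw [br_l (by omega), e1], ?_⟩
      intro i
      rcases lt_trichotomy i l.size with h' | h' | h'
      · rw [br_l (by omega), br_l h', e2]
      · rw [br_m (by omega), br_m h']
      · rw [br_r (by omega), br_r h']
        congr 1; omega

theorem lsp_insL (x : ℕ) (T : BT) (h : OKL x T) :
    lsp (insL x T) = 0 :: ((lsp T).filter (fun s => x ≤ s)).map (· + 1) := by
  induction T with
  | leaf => rfl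
  | node l r ihl ihr =>
    rw [insL]
    split_ifs with hx
    · have : (lsp (node l r)).filter (fun s => x ≤ s) = [] := by
        rw [List.filter_eq_nil_iff]
        intro s hs
        have := lsp_lt _ s hs
        simp only [decide_eq_true_eq]
        omega
      rw [this]
      rfl
    · have ho := OKL_node h hx
      rw [lsp, ihl ho, lsp, size_insL]
      have : x ≤ l.size := by
        rcases ho with ho | ho
        · exact (lsp_lt l x ho).le
        · omega
      simp [List.filter_append, this]

theorem delL_insL (x : ℕ) (T : BT) : delL (insL x T) = T := by
  induction T with
  | leaf => rfl
  | node l r ihl ihr =>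
    rw [insL]
    split_ifs with hx
    · rfl
    · cases hl : insL x l with
      | leaf => have := size_insL x l; rw [hl] at this; simp [size] at this
      | node a b => rw [delL, ← hl, ihl]

theorem xL_insL (x : ℕ) (T : BT) (h : OKL x T) : xL (insL x T) = x := by
  induction T with
  | leaf =>
    have : x = 0 := by simpa [OKL, lsp, size] using h
    subst this
    rfl
  | node l r ihl ihr =>
    rw [insL]
    split_ifs with hx
    · exact hx
    · cases hl : insL x l with
      | leaf => have := size_insL x l; rw [hl] at this; simp [size] at this
      | node a b => rw [xL, ← hl, ihl (OKL_node h hx)]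

theorem insL_delL (T : BT) (h : T.size ≠ 0) : OKL (xL T) (delL T) ∧ insL (xL T) (delL T) = T := by
  induction T with
  | leaf => simp [size] at h
  | node l r ihl ihr =>
    cases l with
    | leaf =>
      rw [delL, xL]
      refine ⟨Or.inr rfl, ?_⟩
      cases r with
      | leaf => rfl
      | node a b => rw [insL, if_pos rfl]
    | node a b =>
      obtain ⟨h1, h2⟩ := ihl (by simp [size])
      rw [delL, xL]
      have hle : xL (node a b) ≤ (delL (node a b)).size := by
        rcases h1 with h | h
        · exact (lsp_lt _ _ h).le
        · omega
      refine ⟨?_, ?_⟩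
      · left
        rw [lsp, List.mem_append, List.mem_singleton]
        exact h1
      · rw [insL, if_neg, h2]
        simp only [size]
        omega

theorem rsp_insL (x : ℕ) (T : BT) (h : x < T.size) : rsp (insL x T) = rsp T := by
  cases T with
  | leaf => simp [size] at h
  | node l r =>
    rw [insL, if_neg (by omega)]
    simp [rsp, mir, lsp]

theorem insR_node (y : ℕ) (l r : BT) : insR y (node l r) =
    if (node l r).size = y then node (node l r) leaf else node l (insR y r) := by
  have : (node r.mir l.mir).size = (node l r).size := by
    simp only [size, size_mir]; omega
  simp only [insR, mir, insL, this]
  split_ifs with h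
  · simp [mir, mir_mir]
  · simp [mir, mir_mir]

theorem size_insR (y : ℕ) (T : BT) : (insR y T).size = T.size + 1 := by
  rw [insR, size_mir, size_insL, size_mir]

theorem OKR_mir {y : ℕ} {T : BT} (h : OKR y T) : OKL y (mir T) := by
  rw [OKL, size_mir]; exact h

theorem OKR_node {y : ℕ} {l r : BT} (h : OKR y (node l r)) (hy : (node l r).size ≠ y) :
    OKR y r := by
  rcases h with h | h
  · simpa [rsp, lsp, OKR, mir, size_mir] using h
  · exact absurd h.symm hy

theorem rsp_insR (y : ℕ) (T : BT) (h : OKR y T) :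
    rsp (insR y T) = 0 :: ((rsp T).filter (fun s => y ≤ s)).map (· + 1) := by
  rw [rsp, insR, mir_mir, lsp_insL y _ (OKR_mir h), rsp]

theorem delR_insR (y : ℕ) (T : BT) : delR (insR y T) = T := by
  rw [delR, insR, mir_mir, delL_insL, mir_mir]

theorem yR_insR (y : ℕ) (T : BT) (h : OKR y T) : yR (insR y T) = y := by
  rw [yR, insR, mir_mir, xL_insL y _ (OKR_mir h)]

theorem insR_delR (T : BT) (h : T.size ≠ 0) : OKR (yR T) (delR T) ∧ insR (yR T) (delR T) = T := by
  obtain ⟨h1, h2⟩ := insL_delL (mir T) (by rwa [size_mir])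
  constructor
  · rw [OKR, rsp, delR, mir_mir, size_mir]; exact h1
  · rw [insR, delR, mir_mir, yR, h2, mir_mir]

theorem lsp_insR (y : ℕ) (T : BT) (h : y < T.size) : lsp (insR y T) = lsp T := by
  have := rsp_insL y (mir T) (by rwa [size_mir])
  rwa [rsp, rsp, mir_mir] at this

theorem insR_size (T : BT) : insR T.size T = node T leaf := by
  cases T with
  | leaf => rfl
  | node l r => rw [insR_node, if_pos rfl]

theorem br_insR (y : ℕ) (T : BT) (h : OKR y T) (i : ℕ) : br (insR y T) i =
    br T i + if i + br T i + 1 = T.size ∧ i + y < T.size then 1 else 0 := by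
  induction T generalizing i with
  | leaf =>
    have e : br (node leaf leaf) i = 0 := by
      rw [br]
      split_ifs <;> rfl
    rw [if_neg (by simp [size])]
    exact e
  | node l r ihl ihr =>
    rw [insR_node]
    have hlr : (node l r).size = l.size + r.size + 1 := rfl
    by_cases hy : (node l r).size = y
    · rw [if_pos hy, if_neg (by omega), Nat.add_zero]
      rcases lt_trichotomy i (node l r).size with h' | h' | h'
      · rw [br_l h']
      · rw [br_m h', br_ge _ _ h'.ge]; rfl
      · rw [br_r h', br_ge _ _ h'.le]; rfl
    · rw [if_neg hy]
      have ho := OKR_node h hy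
      have hyr : y ≤ r.size := by
        rcases ho with h | h
        · exact (rsp_lt _ _ h).le
        · omega
      rcases lt_trichotomy i l.size with h' | h' | h'
      · have := br_lt l i h'
        rw [br_l h', br_l h', if_neg (by omega), Nat.add_zero]
      · rw [br_m h', br_m h', if_pos (by omega), size_insR]
      · rw [br_r h', br_r h', ihr ho]
        congr 1
        apply if_congr _ rfl rfl
        omega

theorem rsp_chain (y : ℕ) (T : BT) (h : y ∈ rsp T) :
    T.size - y - 1 + br T (T.size - y - 1) + 1 = T.size := by
  induction T with
  | leaf => simp [rsp, mir, lsp] at h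
  | node l r ihl ihr =>
    have hlr : (node l r).size = l.size + r.size + 1 := rfl
    have h : y ∈ rsp r ∨ y = r.size := by simpa [rsp, lsp, mir, size_mir] using h
    rcases h with h | h
    · have := rsp_lt r y h
      have h2 := ihr h
      rw [br_r (by omega)]
      rw [show (node l r).size - y - 1 - l.size - 1 = r.size - y - 1 by omega]
      omega
    · rw [br_m (by omega)]
      omega

theorem one_mem_lsp (T : BT) : 1 ∈ lsp T ↔ 2 ≤ T.size ∧ br T 0 = 0 := by
  induction T with
  | leaf => simp [lsp, size]
  | node l r ihl ihr =>
    have hlr : (node l r).size = l.size + r.size + 1 := rfl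
    rw [lsp, List.mem_append, List.mem_singleton, ihl]
    by_cases h0 : l.size = 0
    · rw [br_m h0.symm]; omega
    · rw [br_l (by omega)]
      have := br_lt l 0 (by omega)
      omega

/-- The marked left-spine sizes. -/
def Y (T : BT) (s : ℕ) : Prop := s ∈ rsp T ∧ (s = 0 → 1 ∈ lsp T)

theorem V_ins (T : BT) (x y : ℕ) (hn : 1 ≤ T.size) (hy : OKR y T) (hx : OKL x (insR y T)) :
    V (br (insL x (insR y T))) (T.size + 2) ↔
      V (br T) T.size ∧ x ≤ T.size ∧ (y = T.size ∨ (x ≤ y ∧ Y T y)) := by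
  have hb := br_insL x _ hx
  have hyn : y ≤ T.size := by
    rcases hy with h | h
    · exact (rsp_lt _ _ h).le
    · omega
  rw [V_step (br T) (br (insL x (insR y T))) T.size x y hn (br_lt T) ?_ hyn ?_ hb.1 ?_]
  · simp only [Y, one_mem_lsp]
    by_cases h : y = T.size
    · simp [h]
    · have : y ∈ rsp T := by rcases hy with h' | h' <;> [exact h'; exact absurd h' h]
      simp [h, this]
  · rcases hx with h | h
    · have := lsp_lt _ _ h; rw [size_insR] at this; omega
    · rw [size_insR] at h; omega
  · intro h
    rcases hy with h' | h'
    · exact rsp_chain y T h'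
    · omega
  · intro i
    rw [hb.2, br_insR y T hy]

end SDM
namespace SDM

open BT

/-! ### The generating tree -/

instance (T : BT) (s : ℕ) : Decidable (Y T s) := by unfold Y; infer_instance

/-- the state of a tree -/
def word (T : BT) : List Bool := (lsp T).map (fun s => decide (Y T s))

def prs (T : BT) : List ℕ → List ℕ → List (ℕ × ℕ)
  | _, [] => []
  | α, y :: β =>
    (if Y T y then (α ++ [y]).map (fun x => (x, y)) else []) ++ prs T (α ++ [y]) β

/-- the admissible insertions -/
def pairs (T : BT) : List (ℕ × ℕ) :=
  prs T [] (lsp T) ++ (lsp T ++ [T.size]).map (fun x => (x, T.size))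

def child (T : BT) (p : ℕ × ℕ) : BT := insL p.1 (insR p.2 T)

def children (T : BT) : List BT := (pairs T).map (child T)

theorem mem_prs (T : BT) (α β : List ℕ) (hs : (α ++ β).Pairwise (· < ·)) (x y : ℕ) :
    (x, y) ∈ prs T α β ↔ y ∈ β ∧ Y T y ∧ x ∈ α ++ β ∧ x ≤ y := by
  induction β generalizing α with
  | nil => simp [prs]
  | cons c β ih =>
    have hs' : (α ++ [c] ++ β).Pairwise (· < ·) := by simpa using hs
    rw [prs, List.mem_append, ih _ hs']
    have h1 := List.pairwise_append.1 hs
    have h2 := List.pairwise_cons.1 h1.2.1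
    constructor
    · rintro (h | ⟨h3, h4, h5, h6⟩)
      · split_ifs at h with hY
        · simp only [List.mem_map, Prod.mk.injEq] at h
          obtain ⟨a, ha, rfl, rfl⟩ := h
          simp only [List.mem_append, List.mem_singleton] at ha
          refine ⟨by simp, hY, by simp; tauto, ?_⟩
          rcases ha with ha | ha
          · exact (h1.2.2 a ha c (by simp)).le
          · exact ha.le
        · simp at h
      · exact ⟨by simp [h3], h4, by simpa using h5, h6⟩
    · rintro ⟨h3, h4, h5, h6⟩
      rcases List.mem_cons.1 h3 with rfl | h3
      · left
        rw [if_pos h4]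
        simp only [List.mem_map, Prod.mk.injEq]
        refine ⟨x, ?_, rfl, trivial⟩
        simp only [List.mem_append, List.mem_cons] at h5 ⊢
        rcases h5 with h5 | h5 | h5
        · exact Or.inl h5
        · exact Or.inr (Or.inl h5)
        · have := h2.1 x h5; omega
      · right
        exact ⟨h3, h4, by simpa using h5, h6⟩

theorem nodup_prs (T : BT) (α β : List ℕ) (hs : (α ++ β).Pairwise (· < ·)) :
    (prs T α β).Nodup := by
  induction β generalizing α with
  | nil => simp [prs]
  | cons c β ih =>
    have hs' : (α ++ [c] ++ β).Pairwise (· < ·) := by simpa using hs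
    rw [prs, List.nodup_append']
    refine ⟨?_, ih _ hs', ?_⟩
    · split_ifs
      · refine List.Nodup.map (fun a b h => (Prod.mk.injEq _ _ _ _ ▸ h).1) ?_
        exact ((List.pairwise_append.1 hs').1).imp (fun h => Nat.ne_of_lt h)
      · exact List.nodup_nil
    · rintro ⟨a, b⟩ ha hb
      rw [mem_prs T _ _ hs'] at hb
      split_ifs at ha
      · simp only [List.mem_map, Prod.mk.injEq] at ha
        obtain ⟨_, _, _, rfl⟩ := ha
        have := (List.pairwise_append.1 hs').2.2 c (by simp) c hb.1
        omega
      · simp at ha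

theorem mem_pairs (T : BT) (x y : ℕ) : (x, y) ∈ pairs T ↔
    (y ∈ lsp T ∧ Y T y ∧ x ∈ lsp T ∧ x ≤ y) ∨ ((x ∈ lsp T ∨ x = T.size) ∧ y = T.size) := by
  rw [pairs, List.mem_append, mem_prs T [] (lsp T) (by simpa using lsp_sorted T)]
  apply or_congr
  · rfl
  · simp only [List.mem_map, List.mem_append, List.mem_singleton, Prod.mk.injEq]
    constructor
    · rintro ⟨a, h, rfl, rfl⟩; exact ⟨h, rfl⟩
    · rintro ⟨h, rfl⟩; exact ⟨x, h, rfl, rfl⟩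

theorem nodup_pairs (T : BT) : (pairs T).Nodup := by
  rw [pairs, List.nodup_append']
  refine ⟨nodup_prs T [] (lsp T) (by simpa using lsp_sorted T), ?_, ?_⟩
  · refine List.Nodup.map (fun a b h => (Prod.mk.injEq _ _ _ _ ▸ h).1) ?_
    exact (lsp_sorted (node T leaf)).imp (fun h => Nat.ne_of_lt h)
  · rintro ⟨a, b⟩ ha hb
    rw [mem_prs T [] (lsp T) (by simpa using lsp_sorted T)] at ha
    simp only [List.mem_map, Prod.mk.injEq] at hb
    obtain ⟨_, _, _, rfl⟩ := hb
    have := lsp_lt _ _ ha.1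
    omega

/-- properties of admissible pairs -/
theorem pairs_ok (T : BT) (p : ℕ × ℕ) (h : p ∈ pairs T) :
    OKR p.2 T ∧ OKL p.1 (insR p.2 T) ∧ p.1 ≤ T.size ∧
      (p.2 = T.size ∨ (p.1 ≤ p.2 ∧ Y T p.2)) := by
  obtain ⟨x, y⟩ := p
  rw [mem_pairs] at h
  simp only
  rcases h with ⟨h1, h2, h3, h4⟩ | ⟨h1, rfl⟩
  · refine ⟨Or.inl h2.1, Or.inl ?_, (lsp_lt _ _ h3).le, Or.inr ⟨h4, h2⟩⟩
    rw [lsp_insR y T (lsp_lt _ _ h1)]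
    exact h3
  · refine ⟨Or.inr rfl, Or.inl ?_, ?_, Or.inl rfl⟩
    · rw [insR_size, lsp]
      simpa using h1
    · rcases h1 with h1 | h1
      · exact (lsp_lt _ _ h1).le
      · exact h1.le

theorem rsp_child (T : BT) (p : ℕ × ℕ) (h : p ∈ pairs T) :
    rsp (child T p) = 0 :: ((rsp T).filter (fun s => p.2 ≤ s)).map (· + 1) := by
  obtain ⟨h1, h2, h3, _⟩ := pairs_ok T p h
  rw [child, rsp_insL _ _ (by rw [size_insR]; omega), rsp_insR _ _ h1]

theorem lsp_child (T : BT) (p : ℕ × ℕ) (h : p ∈ pairs T) :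
    lsp (child T p) = 0 :: ((lsp (insR p.2 T)).filter (fun s => p.1 ≤ s)).map (· + 1) := by
  obtain ⟨h1, h2, h3, _⟩ := pairs_ok T p h
  rw [child, lsp_insL _ _ h2]

theorem Y_child_succ (T : BT) (p : ℕ × ℕ) (h : p ∈ pairs T) (s : ℕ) :
    Y (child T p) (s + 1) ↔ s ∈ rsp T ∧ p.2 ≤ s := by
  rw [Y, rsp_child T p h]
  simp

theorem Y_child_zero (T : BT) (p : ℕ × ℕ) (h : p ∈ pairs T) :
    Y (child T p) 0 ↔ p.1 = 0 := by
  rw [Y, rsp_child T p h, lsp_child T p h]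
  obtain ⟨t, ht⟩ := lsp_head (insR p.2 T) (by rw [size_insR]; omega)
  rw [ht]
  simp

theorem word_child (T : BT) (p : ℕ × ℕ) (h : p ∈ pairs T) :
    word (child T p) = decide (p.1 = 0) ::
      ((lsp (insR p.2 T)).filter (fun s => p.1 ≤ s)).map
        (fun s => decide (s ∈ rsp T ∧ p.2 ≤ s)) := by
  rw [word, lsp_child T p h, List.map_cons, List.map_map]
  congr 1
  · exact decide_eq_decide.2 (Y_child_zero T p h)
  · apply List.map_congr_left
    intro s _
    exact decide_eq_decide.2 (Y_child_succ T p h s)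

theorem mf (f : ℕ → Bool) (α : List ℕ) (y : ℕ) (β : List ℕ)
    (hs : (α ++ y :: β).Pairwise (· < ·)) (hf : ∀ s ∈ α, f s = false) :
    (α ++ [y]).map (fun x => ((α ++ y :: β).filter (fun s => x ≤ s)).map f) =
      (List.range (α.length + 1)).map (fun t => Nn (α.length - t) ++ f y :: β.map f) := by
  induction α with
  | nil =>
    have h2 := List.pairwise_cons.1 hs
    have : (y :: β).filter (fun s => y ≤ s) = y :: β := by
      rw [List.filter_eq_self]
      intro a ha
      rcases List.mem_cons.1 ha with rfl | ha
      · simp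
      · simpa using (h2.1 a ha).le
    simp [this, Nn]
  | cons c α ih =>
    rw [List.cons_append] at hs
    have h2 := List.pairwise_cons.1 hs
    have e1 : (c :: (α ++ y :: β)).filter (fun s => c ≤ s) = c :: (α ++ y :: β) := by
      rw [List.filter_eq_self]
      intro a ha
      rcases List.mem_cons.1 ha with rfl | ha
      · simp
      · simpa using (h2.1 a ha).le
    have e2 : ∀ α' : List ℕ, (∀ s ∈ α', f s = false) → α'.map f = Nn α'.length := by
      intro α' h
      rw [List.eq_replicate_iff]
      simpa using h
    simp only [List.cons_append]
    rw [List.length_cons, List.range_succ_eq_map, List.map_cons, List.map_cons,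
      List.map_map, e1]
    congr 1
    · rw [← List.cons_append, List.map_append, e2 _ hf]
      simp
    · have ih' := ih h2.2 (fun s h => hf s (by simp [h]))
      have e3 : (α ++ [y]).map (fun x => ((c :: (α ++ y :: β)).filter (fun s => x ≤ s)).map f) =
          (α ++ [y]).map (fun x => ((α ++ y :: β).filter (fun s => x ≤ s)).map f) := by
        apply List.map_congr_left
        intro x hx
        have := h2.1 x (by simp at hx ⊢; tauto)
        rw [List.filter_cons_of_neg (by simpa using this)]
      rw [e3, ih']
      apply List.map_congr_left
      intro t _
      simp

theorem mf_head (f : ℕ → Bool) (α : List ℕ) (y : ℕ) (β t : List ℕ)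
    (hs : (α ++ y :: β).Pairwise (· < ·)) (hf : ∀ s ∈ α, f s = false)
    (ht : α ++ y :: β = 0 :: t) :
    (α ++ [y]).map
        (fun x => decide (x = 0) :: ((α ++ y :: β).filter (fun s => x ≤ s)).map f) =
      (bottom 0 α.length).map (· ++ f y :: β.map f) := by
  have h := mf f α y β hs hf
  cases α with
  | nil =>
    simp only [List.nil_append, List.cons.injEq] at ht
    obtain ⟨rfl, rfl⟩ := ht
    simp [bottom]
  | cons c α =>
    simp only [List.cons_append, List.cons.injEq] at ht
    obtain ⟨rfl, rfl⟩ := ht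
    simp only [List.cons_append] at h hs ⊢
    rw [List.length_cons, List.range_succ_eq_map, List.map_cons, List.map_cons,
      List.map_map] at h
    obtain ⟨h1, h2⟩ := List.cons.inj h
    rw [bottom, List.map_cons, List.map_cons]
    congr 1
    · rw [h1]; simp
    · have hpos : ∀ x ∈ α ++ [y], x ≠ 0 := by
        intro x hx
        have := (List.pairwise_cons.1 hs).1 x (by simp at hx ⊢; tauto)
        omega
      have e : (α ++ [y]).map
          (fun x => decide (x = 0) :: ((0 :: (α ++ y :: β)).filter (fun s => x ≤ s)).map f) =
          ((α ++ [y]).map (fun x => ((0 :: (α ++ y :: β)).filter (fun s => x ≤ s)).map f)).map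
            (fun w => false :: w) := by
        rw [List.map_map]
        apply List.map_congr_left
        intro x hx
        simp [hpos x hx]
      rw [e, h2, List.map_map, List.map_map, List.length_cons]
      apply List.map_congr_left
      intro t ht
      rw [List.mem_range] at ht
      simp only [Function.comp]
      rw [show α.length + 1 - t + 0 = (α.length + 1 - Nat.succ t) + 1 by omega]
      rfl

theorem word_prs (T : BT) (α β : List ℕ) (hl : lsp T = α ++ β)
    (hp : ∀ p ∈ prs T α β, p ∈ pairs T) :
    (prs T α β).map (fun p => word (child T p)) =
      extch α.length (β.map (fun s => decide (Y T s))) := by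
  induction β generalizing α with
  | nil => simp [prs, extch]
  | cons y β ih =>
    have hs := lsp_sorted T
    rw [hl] at hs
    have h1 := List.pairwise_append.1 hs
    have h2 := List.pairwise_cons.1 h1.2.1
    rw [prs, List.map_append, List.map_cons, extch,
      ih (α ++ [y]) (by simpa using hl) (fun p h => hp p (by rw [prs]; exact List.mem_append_right _ h)),
      List.length_append]
    congr 1
    by_cases hY : Y T y
    · simp only [hY, decide_true, if_true]
      rw [prs, if_pos hY] at hp
      have hy : y < T.size := lsp_lt T y (by rw [hl]; simp)
      obtain ⟨t, ht⟩ := lsp_head T (by omega)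
      have key := mf_head (fun s => decide (s ∈ rsp T ∧ y ≤ s)) α y β t hs ?_ (by rw [← hl, ht])
      · rw [List.map_map]
        have e1 : (α ++ [y]).map ((fun p => word (child T p)) ∘ fun x => (x, y)) =
          (α ++ [y]).map (fun x => decide (x = 0) ::
            ((α ++ y :: β).filter (fun s => x ≤ s)).map (fun s => decide (s ∈ rsp T ∧ y ≤ s))) := by
          apply List.map_congr_left
          intro x hx
          simp only [Function.comp]
          rw [word_child T (x, y) (hp _ (List.mem_append_left _ (List.mem_map.2 ⟨x, hx, rfl⟩)))]
          simp only [lsp_insR y T hy, hl]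
        rw [e1, key]
        have e2 : β.map (fun s => decide (s ∈ rsp T ∧ y ≤ s)) = β.map (fun s => decide (Y T s)) := by
          apply List.map_congr_left
          intro s hs
          have := h2.1 s hs
          apply decide_eq_decide.2
          rw [Y]
          constructor
          · rintro ⟨h, _⟩; exact ⟨h, by omega⟩
          · rintro ⟨h, _⟩; exact ⟨h, by omega⟩
        rw [e2]
        simp [hY.1]
      · intro s hs
        have := h1.2.2 s hs y (by simp)
        simp only [decide_eq_false_iff_not]
        omega
    · simp [hY]

theorem word_children (T : BT) (hn : T.size ≠ 0) :
    (children T).map word = chw 1 (word T) := by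
  rw [children, List.map_map, pairs, List.map_append, chw]
  congr 1
  · exact word_prs T [] (lsp T) rfl (fun p h => by rw [pairs]; exact List.mem_append_left _ h)
  · obtain ⟨t, ht⟩ := lsp_head T hn
    have key := mf_head (fun s => decide (s ∈ rsp T ∧ T.size ≤ s)) (lsp T) T.size [] (t ++ [T.size])
      (lsp_sorted (node T leaf)) ?_ (by rw [ht]; rfl)
    · have e1 : ((lsp T ++ [T.size]).map (fun x => (x, T.size))).map (word ∘ child T) =
        (lsp T ++ [T.size]).map (fun x => decide (x = 0) ::
            ((lsp T ++ [T.size]).filter (fun s => x ≤ s)).map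
              (fun s => decide (s ∈ rsp T ∧ T.size ≤ s))) := by
        rw [List.map_map]
        apply List.map_congr_left
        intro x hx
        simp only [Function.comp]
        rw [word_child T (x, T.size) ((mem_pairs T _ _).2 (Or.inr ⟨by simpa using hx, rfl⟩))]
        simp only [insR_size, lsp]
      rw [e1, key]
      have hno : T.size ∉ rsp T := fun h => by have := rsp_lt _ _ h; omega
      have : ∀ c, Nn c ++ [false] = Nn (c + 1) := fun c => (List.replicate_succ' ..).symm
      simp only [hno, false_and, decide_false, List.map_nil, bottom, word, List.length_map,
        List.map_cons, List.cons_append, List.map_map, this]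
      congr 1
      apply List.map_congr_left
      intro a _
      simp only [Function.comp, this, Nat.add_zero]
    · intro s hs
      have := lsp_lt _ _ hs
      simp only [decide_eq_false_iff_not]
      omega

/-! ### Counting -/

def Inv (T : BT) : Prop := ∀ s, Y T s → s ∈ lsp T

theorem Inv_child (T : BT) (hT : Inv T) (p : ℕ × ℕ) (h : p ∈ pairs T) : Inv (child T p) := by
  intro s hs
  rw [lsp_child T p h]
  cases s with
  | zero => simp
  | succ s =>
    rw [Y_child_succ T p h] at hs
    obtain ⟨h1, h2, h3, h4⟩ := pairs_ok T p h
    have hlt := rsp_lt _ _ hs.1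
    rcases h4 with h4 | ⟨h4, h5⟩
    · omega
    · have hY : Y T s := by
        refine ⟨hs.1, fun h0 => ?_⟩
        have := hs.2
        exact h5.2 (by omega)
      rw [lsp_insR _ _ (by omega)]
      simp only [List.mem_cons, List.mem_map, List.mem_filter]
      right
      exact ⟨s, ⟨hT s hY, by simp only [decide_eq_true_eq]; omega⟩, rfl⟩

theorem size_child (T : BT) (p : ℕ × ℕ) : (child T p).size = T.size + 2 := by
  rw [child, size_insL, size_insR]

theorem del_child (T : BT) (p : ℕ × ℕ) : delR (delL (child T p)) = T := by
  rw [child, delL_insL, delR_insR]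

theorem nodup_children (T : BT) : (children T).Nodup := by
  apply List.Nodup.map_on _ (nodup_pairs T)
  rintro ⟨x, y⟩ hp ⟨x', y'⟩ hp' h
  obtain ⟨h1, h2, _⟩ := pairs_ok T _ hp
  obtain ⟨h1', h2', _⟩ := pairs_ok T _ hp'
  have e1 := congrArg xL h
  have e2 := congrArg (fun T => yR (delL T)) h
  simp only [child] at e1 e2
  rw [xL_insL _ _ h2, xL_insL _ _ h2'] at e1
  rw [delL_insL, delL_insL, yR_insR _ _ h1, yR_insR _ _ h1'] at e2
  exact Prod.ext e1 e2

/-- `l` enumerates the valid trees of size `m` -/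
def Enum (m : ℕ) (l : List BT) : Prop :=
  l.Nodup ∧ (∀ T, T ∈ l ↔ T.size = m ∧ V (br T) m) ∧ ∀ T ∈ l, Inv T

theorem Enum_step (m : ℕ) (hm : 1 ≤ m) (l : List BT) (h : Enum m l) :
    Enum (m + 2) (l.flatMap children) := by
  obtain ⟨hN, hM, hI⟩ := h
  refine ⟨?_, ?_, ?_⟩
  · rw [List.nodup_flatMap]
    refine ⟨fun T _ => nodup_children T, hN.imp ?_⟩
    intro a b hab S hS hS'
    obtain ⟨p, _, rfl⟩ := List.mem_map.1 hS
    obtain ⟨q, _, hq⟩ := List.mem_map.1 hS'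
    apply hab
    rw [← del_child a p, ← hq, del_child]
  · intro S
    rw [List.mem_flatMap]
    constructor
    · rintro ⟨T, hT, hS⟩
      obtain ⟨p, hp, rfl⟩ := List.mem_map.1 hS
      obtain ⟨rfl, hV⟩ := (hM T).1 hT
      obtain ⟨h1, h2, h3, h4⟩ := pairs_ok T p hp
      exact ⟨size_child T p, (V_ins T p.1 p.2 hm h1 h2).2 ⟨hV, h3, h4⟩⟩
    · rintro ⟨hS, hV⟩
      obtain ⟨x1, e1⟩ := insL_delL S (by omega)
      have s1 := congrArg size e1
      rw [size_insL] at s1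
      obtain ⟨x2, e2⟩ := insR_delR (delL S) (by omega)
      have s2 := congrArg size e2
      rw [size_insR] at s2
      generalize delR (delL S) = T at *
      generalize yR (delL S) = y at *
      generalize xL S = x at *
      have hTm : T.size = m := by omega
      subst hTm
      rw [← e2] at e1 x1
      subst e1
      rw [V_ins T x y hm x2 x1] at hV
      obtain ⟨hV1, hx, hor⟩ := hV
      have hT := (hM T).2 ⟨rfl, hV1⟩
      refine ⟨T, hT, List.mem_map.2 ⟨(x, y), ?_, rfl⟩⟩
      rw [mem_pairs]
      by_cases hy : y = T.size
      · right
        subst hy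
        rw [insR_size] at x1
        refine ⟨?_, rfl⟩
        rcases x1 with h | h
        · simpa [lsp] using h
        · simp only [size] at h; omega
      · left
        rcases hor with h | ⟨h, hY⟩
        · exact absurd h hy
        · refine ⟨hI T hT y hY, hY, ?_, h⟩
          have := rsp_lt _ _ hY.1
          rcases x1 with h' | h'
          · rwa [lsp_insR _ _ this] at h'
          · rw [size_insR] at h'; omega
  · intro S hS
    obtain ⟨T, hT, hS⟩ := List.mem_flatMap.1 hS
    obtain ⟨p, hp, rfl⟩ := List.mem_map.1 hS
    exact Inv_child T (hI T hT) p hp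

theorem Enum_count (k m : ℕ) (hm : 1 ≤ m) (l : List BT) (h : Enum m l) :
    Set.ncard {T : BT | T.size = m + 2 * k ∧ V (br T) (m + 2 * k)} =
      (l.map (fun T => pc k (word T))).sum := by
  induction k generalizing m l with
  | zero =>
    have e : {T : BT | T.size = m + 2 * 0 ∧ V (br T) (m + 2 * 0)} = {T | T ∈ l} := by
      ext T; exact (h.2.1 T).symm
    rw [e]
    classical
    have e2 : {T | T ∈ l} = ((l.toFinset : Finset BT) : Set BT) := by ext; simp
    rw [e2, Set.ncard_coe_finset, List.toFinset_card_of_nodup h.1]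
    simp [pc]
  | succ k ih =>
    have := ih (m + 2) (by omega) _ (Enum_step m hm l h)
    rw [show m + 2 * (k + 1) = m + 2 + 2 * k by ring, this]
    have hs : ∀ T ∈ l, T.size ≠ 0 := fun T hT => by
      have := ((h.2.1 T).1 hT).1; omega
    clear h this ih
    induction l with
    | nil => rfl
    | cons T l ih =>
      rw [List.flatMap_cons, List.map_append, List.sum_append, List.map_cons, List.sum_cons,
        ih (fun T h => hs T (by simp [h])), pc, ← word_children T (hs T (by simp)), List.map_map]
      rfl

theorem Enum_one : Enum 1 [node leaf leaf] := by
  refine ⟨by simp, ?_, ?_⟩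
  · intro T
    rw [List.mem_singleton]
    constructor
    · rintro rfl
      refine ⟨rfl, ?_, ?_⟩
      · intro i j; omega
      · intro i j; omega
    · rintro ⟨h, _⟩
      match T, h with
      | node leaf leaf, _ => rfl
      | node (node a b) r, h => simp only [size] at h; omega
      | node l (node a b), h => simp only [size] at h; omega
  · intro T hT
    rw [List.mem_singleton] at hT
    subst hT
    intro s hs
    have := rsp_lt _ _ hs.1
    simp only [size] at this
    simp [lsp, size]
    omega

theorem Enum_two : Enum 2 [node (node leaf leaf) leaf] := by
  refine ⟨by simp, ?_, ?_⟩
  · intro T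
    rw [List.mem_singleton]
    constructor
    · rintro rfl
      refine ⟨rfl, ?_, ?_⟩
      · intro i j h1 h2 h3
        obtain rfl : i = 0 := by omega
        obtain rfl : j = 1 := by omega
        simp [br, size] at h3
      · intro i j; omega
    · rintro ⟨h, hV⟩
      match T, h with
      | leaf, h => simp [size] at h
      | node leaf leaf, h => simp [size] at h
      | node leaf (node a b), h =>
        exfalso
        simp only [size] at h
        refine hV.1 0 1 (by omega) (by omega) ?_ ?_
        · rw [br_m (by rfl)]; simp [size]
        · rw [br_m (by rfl)]; simp [size]
      | node (node leaf leaf) leaf, h => rfl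
      | node (node a b) (node c d), h => simp only [size] at h; omega
      | node (node (node a b) c) d, h => simp only [size] at h; omega
      | node (node c (node a b)) d, h => simp only [size] at h; omega
  · intro T hT
    rw [List.mem_singleton] at hT
    subst hT
    intro s hs
    have := rsp_lt _ _ hs.1
    simp only [size] at this
    simp [lsp, size]
    omega

end SDM

theorem count_self_dual_modern_intervals (k : ℕ) :
    (1 ≤ k →
      (k + 1) *
          Set.ncard {p : BT × BT | BT.interval p (2 * k) ∧ BT.modern p ∧ BT.selfDual p} =
        2 ^ (k - 1) * Nat.choose (2 * k) k) ∧
    (k + 1) *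
        Set.ncard {p : BT × BT | BT.interval p (2 * k + 1) ∧ BT.modern p ∧ BT.selfDual p} =
      2 ^ k * Nat.choose (2 * k) k := by
  have cb : (k + 1) * catalan k = Nat.choose (2 * k) k := by
    rw [succ_mul_catalan_eq_centralBinom, Nat.centralBinom]
  constructor
  · intro hk
    obtain ⟨m, rfl⟩ : ∃ m, k = m + 1 := ⟨k - 1, by omega⟩
    have h := SDM.Enum_count m 2 (by omega) _ SDM.Enum_two
    have hw : SDM.word (BT.node (BT.node BT.leaf BT.leaf) BT.leaf) = [true, false] := by decide
    rw [SDM.ncard_eq, show 2 * (m + 1) = 2 + 2 * m by ring, h]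
    rw [show 2 + 2 * m = 2 * (m + 1) by ring, ← cb]
    simp only [List.map_cons, List.map_nil, List.sum_cons, List.sum_nil, hw, SDM.pc_even,
      Nat.add_sub_cancel]
    ring
  · have h := SDM.Enum_count k 1 (by omega) _ SDM.Enum_one
    have hw : SDM.word (BT.node BT.leaf BT.leaf) = [false] := by decide
    rw [SDM.ncard_eq, show 2 * k + 1 = 1 + 2 * k by ring, h, ← cb]
    simp only [List.map_cons, List.map_nil, List.sum_cons, List.sum_nil, hw, SDM.pc_odd]
    ring
end
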